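/- arXiv:1801.08056 — 3 statements merged into one kernel-verified Lean document; each statement's English description precedes it below -/
import Mathlib

section
/- For every n ≥ 0, the identity of polynomials in one variable x holds: Σ_{π ∈ B_n} x^{fdes(π)} = Σ_{k=0}^{n} C(n,k) · (Σ_{σ ∈ Q_k} x^{fap(σ)}) · (Σ_{σ ∈ Q_{n−k}} x^{2·ap(σ)}), where C(n,k) is the binomial coefficient. -/
open Finset MvPolynomial

/-- Stirling permutations of order `n`, encoded as functions `Fin (2*n) → Fin (n+1)`
in one-line notation (position `i` holds the letter `σ (i) ∈ {1,…,n}`), such that each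
letter `1,…,n` occurs exactly twice and all entries between the two occurrences of a
letter are larger than that letter. -/
def StirlingSet (n : ℕ) : Finset (Fin (2*n) → Fin (n+1)) :=
  Finset.univ.filter (fun σ =>
    (∀ v : Fin (n+1), (v : ℕ) ≠ 0 →
        (Finset.univ.filter (fun i => σ i = v)).card = 2) ∧
    (∀ i j k : Fin (2*n), i < j → j < k → σ i = σ k → σ i < σ j))

/-- The letter at position `i ∈ {1,…,2n}` of a Stirling permutation, with the
convention that positions outside this range (in particular position `0`) hold `0`. -/
def sval {n : ℕ} (σ : Fin (2*n) → Fin (n+1)) (i : ℕ) : ℕ :=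
  if h : 1 ≤ i ∧ i ≤ 2*n then (σ ⟨i - 1, by omega⟩ : ℕ) else 0

/-- The number of ascent-plateaus: indices `2 ≤ i ≤ 2n-1` with `σ_{i-1} < σ_i = σ_{i+1}`. -/
def apQ {n : ℕ} (σ : Fin (2*n) → Fin (n+1)) : ℕ :=
  ((Finset.Icc 2 (2*n - 1)).filter
    (fun i => sval σ (i-1) < sval σ i ∧ sval σ i = sval σ (i+1))).card

/-- The number of left ascent-plateaus: indices `1 ≤ i ≤ 2n-1` with
`σ_{i-1} < σ_i = σ_{i+1}`, where `σ_0 = 0`. -/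
def lapQ {n : ℕ} (σ : Fin (2*n) → Fin (n+1)) : ℕ :=
  ((Finset.Icc 1 (2*n - 1)).filter
    (fun i => sval σ (i-1) < sval σ i ∧ sval σ i = sval σ (i+1))).card

/-- The number of double ascents: indices `1 ≤ i ≤ 2n-1` with
`σ_{i-1} < σ_i < σ_{i+1}`, where `σ_0 = 0`. -/
def dascQ {n : ℕ} (σ : Fin (2*n) → Fin (n+1)) : ℕ :=
  ((Finset.Icc 1 (2*n - 1)).filter
    (fun i => sval σ (i-1) < sval σ i ∧ sval σ i < sval σ (i+1))).card

/-- The number of descent-plateaus: indices `2 ≤ i ≤ 2n-1` with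
`σ_{i-1} > σ_i = σ_{i+1}`. -/
def dpQ {n : ℕ} (σ : Fin (2*n) → Fin (n+1)) : ℕ :=
  ((Finset.Icc 2 (2*n - 1)).filter
    (fun i => sval σ i < sval σ (i-1) ∧ sval σ i = sval σ (i+1))).card

/-- The number of ascents: indices `1 ≤ i ≤ 2n-1` with `σ_i < σ_{i+1}` or `i = 1`. -/
def ascQ {n : ℕ} (σ : Fin (2*n) → Fin (n+1)) : ℕ :=
  ((Finset.Icc 1 (2*n - 1)).filter
    (fun i => sval σ i < sval σ (i+1) ∨ i = 1)).card

/-- The number of plateaus: indices `1 ≤ i ≤ 2n-1` with `σ_i = σ_{i+1}`. -/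
def platQ {n : ℕ} (σ : Fin (2*n) → Fin (n+1)) : ℕ :=
  ((Finset.Icc 1 (2*n - 1)).filter (fun i => sval σ i = sval σ (i+1))).card

/-- The flag ascent-plateau number: `2·ap(σ)+1` if `σ_1 = σ_2`, and `2·ap(σ)` otherwise. -/
def fapQ {n : ℕ} (σ : Fin (2*n) → Fin (n+1)) : ℕ :=
  if 1 ≤ n ∧ sval σ 1 = sval σ 2 then 2 * apQ σ + 1 else 2 * apQ σ

/-- Signed permutations (the hyperoctahedral group `B_n`), encoded as a pair of a
permutation of `Fin n` and a sign vector; the one-line word is recovered by `bval`. -/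
abbrev SignedPerm (n : ℕ) := Equiv.Perm (Fin n) × (Fin n → Bool)

/-- The value `π(i) ∈ ±[n]` of the signed permutation at position `i ∈ {1,…,n}`,
with the convention `π(0) = 0` (and value `0` outside the range). -/
def bval {n : ℕ} (π : SignedPerm n) (i : ℕ) : ℤ :=
  if h : 1 ≤ i ∧ i ≤ n then
    (if π.2 ⟨i - 1, by omega⟩ then -(((π.1 ⟨i - 1, by omega⟩ : ℕ) : ℤ) + 1)
      else ((π.1 ⟨i - 1, by omega⟩ : ℕ) : ℤ) + 1)
  else 0

/-- The type-A descent number of a signed permutation: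
`#{i ∈ [n-1] : π(i) > π(i+1)}`. -/
def desA {n : ℕ} (π : SignedPerm n) : ℕ :=
  ((Finset.Icc 1 (n - 1)).filter (fun i => bval π (i+1) < bval π i)).card

/-- The type-B descent number of a signed permutation:
`#{i ∈ {0,1,…,n-1} : π(i) > π(i+1)}` with `π(0) = 0`. -/
def desB {n : ℕ} (π : SignedPerm n) : ℕ :=
  ((Finset.range n).filter (fun i => bval π (i+1) < bval π i)).card

/-- The flag descent number: `2·des_A(π)+1` if `π(1) < 0`, and `2·des_A(π)` otherwise. -/
def fdes {n : ℕ} (π : SignedPerm n) : ℕ :=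
  if bval π 1 < 0 then 2 * desA π + 1 else 2 * desA π

/-! ### Inserting a pair of maximal letters into a word -/

/-- Indicator of an ascent-plateau of `w` at the positions `i, i + 1, i + 2`. -/
def apInd (w : ℕ → ℕ) (i : ℕ) : ℕ :=
  if w i < w (i + 1) ∧ w (i + 1) = w (i + 2) then 1 else 0

/-- The word `w` with two letters `M` inserted in front of position `p`. -/
def insPair (p M : ℕ) (w : ℕ → ℕ) (i : ℕ) : ℕ :=
  if i < p then w i else if i < p + 2 then M else w (i - 2)

/-- The number of ascent-plateaus of `w` broken by an insertion between positions
`q` and `q + 1`. -/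
def apHit (w : ℕ → ℕ) : ℕ → ℕ
  | 0 => apInd w 0
  | q + 1 => apInd w (q + 1) + apInd w q

theorem apInd_insPair_of_lt {p M i : ℕ} {w : ℕ → ℕ} (h : i + 2 < p) :
    apInd (insPair p M w) i = apInd w i := by
  simp [apInd, insPair, h, show i < p by omega, show i + 1 < p by omega]

theorem apInd_insPair_add_two {p M i : ℕ} {w : ℕ → ℕ} (h : p ≤ i) :
    apInd (insPair p M w) (i + 2) = apInd w i := by
  simp [apInd, insPair, show ¬ i + 2 < p by omega, show ¬ i + 2 + 1 < p by omega,
    show ¬ i + 2 + 2 < p by omega, show ¬ i < p by omega, show ¬ i + 2 + 1 < p + 2 by omega,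
    show i + 2 + 1 - 2 = i + 1 by omega]

theorem sum_apInd_insPair_zero {M : ℕ} {w : ℕ → ℕ} (hw : ∀ i, w i < M) (N : ℕ) :
    ∑ i ∈ range (N + 2), apInd (insPair 0 M w) i = ∑ i ∈ range N, apInd w i := by
  rw [sum_range_succ', sum_range_succ']
  have h0 : apInd (insPair 0 M w) 0 = 0 := by simp [apInd, insPair]
  have h1 : apInd (insPair 0 M w) (0 + 1) = 0 := by
    simp [apInd, insPair, (hw 0).le]
  rw [h0, h1]
  simpa using sum_congr rfl fun i _ => apInd_insPair_add_two (Nat.zero_le i)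

theorem sum_apInd_insPair_succ {M : ℕ} {w : ℕ → ℕ} (hw : ∀ i, w i < M) {q N : ℕ} (hq : q < N) :
    ∑ i ∈ range (N + 2), apInd (insPair (q + 1) M w) i + apHit w q =
      ∑ i ∈ range N, apInd w i + 1 := by
  induction N, hq using Nat.le_induction with
  | base =>
    have hA : apInd (insPair (q + 1) M w) q = 1 := by
      simp [apInd, insPair, hw q]
    have hB : apInd (insPair (q + 1) M w) (q + 1) = 0 := by
      simp [apInd, insPair]
    have hC : apInd (insPair (q + 1) M w) (q + 2) = 0 := by
      simp [apInd, insPair, (hw _).le]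
    simp only [Nat.succ_eq_add_one, sum_range_succ _ (q + 2), sum_range_succ _ (q + 1), hA, hB, hC,
      sum_range_succ _ q]
    cases q with
    | zero => simp [apHit, add_comm]
    | succ r =>
      have hD : apInd (insPair (r + 1 + 1) M w) r = 0 := by
        simp [apInd, insPair, (hw _).ne]
      have hE : ∑ i ∈ range r, apInd (insPair (r + 1 + 1) M w) i = ∑ i ∈ range r, apInd w i :=
        sum_congr rfl fun i hi => apInd_insPair_of_lt (by have := mem_range.1 hi; omega)
      rw [sum_range_succ _ r, sum_range_succ _ r, hD, hE, apHit]
      omega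
  | succ N hN ih =>
    rw [sum_range_succ _ (N + 2), sum_range_succ _ N, apInd_insPair_add_two hN]
    omega

theorem apHit_le_one (w : ℕ → ℕ) (q : ℕ) : apHit w q ≤ 1 := by
  cases q with
  | zero => simp only [apHit, apInd]; split_ifs <;> omega
  | succ q => grind [apHit, apInd]

theorem sum_apHit_add (w : ℕ → ℕ) (N : ℕ) :
    ∑ q ∈ range (N + 1), apHit w q + apInd w N = 2 * ∑ i ∈ range (N + 1), apInd w i := by
  induction N with
  | zero => simp [apHit]; omega
  | succ N ih => rw [sum_range_succ, sum_range_succ _ (N + 1), apHit]; omega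

theorem sum_apHit {w : ℕ → ℕ} {N : ℕ} (h : ∀ i, N ≤ i → w i = 0) :
    ∑ q ∈ range N, apHit w q = 2 * ∑ i ∈ range N, apInd w i := by
  cases N with
  | zero => simp
  | succ N =>
    have := sum_apHit_add w N
    rwa [show apInd w N = 0 by simp [apInd, h (N + 1) le_rfl], add_zero] at this

theorem pow_two_mul_of_add_eq {R : Type*} [CommRing R] (x : R) {a b k : ℕ} (hk : k ≤ 1)
    (h : b + k = a + 1) : x ^ (2 * b) = x ^ (2 * a) * (x ^ 2 + k * (1 - x ^ 2)) := by
  interval_cases k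
  · obtain rfl : b = a + 1 := by omega
    push_cast; ring
  · obtain rfl : b = a := by omega
    push_cast; ring

theorem sum_pow_insPair {R : Type*} [CommRing R] (x : R) {M N : ℕ} {w : ℕ → ℕ}
    (hM : ∀ i, w i < M) (h0 : ∀ i, N ≤ i → w i = 0) :
    ∑ p ∈ range (N + 1), x ^ (2 * ∑ i ∈ range (N + 2), apInd (insPair p M w) i) =
      x ^ (2 * ∑ i ∈ range N, apInd w i) *
        (1 + N * x ^ 2 + (2 * ∑ i ∈ range N, apInd w i : ℕ) * (1 - x ^ 2)) := by
  have hs : ∑ q ∈ range N, (apHit w q : R) = (2 * ∑ i ∈ range N, apInd w i : ℕ) := by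
    rw [← Nat.cast_sum, sum_apHit h0]
  rw [sum_range_succ', sum_apInd_insPair_zero hM,
    sum_congr rfl fun q hq => pow_two_mul_of_add_eq x (apHit_le_one w q)
      (sum_apInd_insPair_succ hM (mem_range.1 hq)), ← mul_sum, sum_add_distrib, ← sum_mul, hs]
  simp only [sum_const, card_range, nsmul_eq_mul]
  ring

/-- Indicator of an initial plateau of a word of length `N`. -/
def initInd (N : ℕ) (w : ℕ → ℕ) : ℕ :=
  if 0 < N ∧ w 0 = w 1 then 1 else 0

theorem sum_pow_insPair_initInd {R : Type*} [CommRing R] (x : R) {M N : ℕ} {w : ℕ → ℕ}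
    (hM : ∀ i, w i < M) (h0 : ∀ i, N ≤ i → w i = 0) :
    ∑ p ∈ range (N + 1), x ^ (2 * ∑ i ∈ range (N + 2), apInd (insPair p M w) i +
        initInd (N + 2) (insPair p M w)) =
      x ^ (2 * ∑ i ∈ range N, apInd w i + initInd N w) *
        (x + N * x ^ 2 + (2 * ∑ i ∈ range N, apInd w i + initInd N w : ℕ) * (1 - x ^ 2)) := by
  have e0 : initInd (N + 2) (insPair 0 M w) = 1 := by simp [initInd, insPair]
  have e1 : initInd (N + 2) (insPair 1 M w) = 0 := by simp [initInd, insPair, (hM 0).ne]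
  have e2 (q : ℕ) (hq : 0 < N) :
      initInd (N + 2) (insPair (q + 1 + 1) M w) = initInd N w := by
    simp [initInd, insPair, hq]
  have key := sum_pow_insPair x hM h0
  cases N with
  | zero =>
    rw [sum_range_succ, sum_range_zero, sum_apInd_insPair_zero hM, e0]
    simp [initInd]
  | succ N =>
    have h1 := pow_two_mul_of_add_eq x (apHit_le_one w 0)
      (sum_apInd_insPair_succ hM N.succ_pos)
    rw [sum_range_succ', sum_range_succ', sum_apInd_insPair_zero hM] at key ⊢
    simp only [zero_add, e0, e1, e2 _ N.succ_pos, pow_add, pow_zero, mul_one, ← sum_mul] at key h1 ⊢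
    rw [← eq_sub_iff_add_eq, ← eq_sub_iff_add_eq] at key
    rw [key, h1]
    have hk : initInd (N + 1) w = 0 ∨ initInd (N + 1) w = 1 ∧ apHit w 0 = 0 := by
      by_cases h : w 0 = w 1
      · right; simp [initInd, apHit, apInd, h]
      · left; simp [initInd, h]
    rcases hk with hk | ⟨hk, hk'⟩
    · rw [hk]; push_cast; ring
    · rw [hk, hk']; push_cast; ring

/-! ### Inserting an extremal letter into a word -/

/-- Indicator of a descent of `u` at the positions `i, i + 1`. -/
def desInd (u : ℕ → ℤ) (i : ℕ) : ℕ :=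
  if u (i + 1) < u i then 1 else 0

/-- The word `u` with the letter `y` inserted in front of position `p`. -/
def insOne (p : ℕ) (y : ℤ) (u : ℕ → ℤ) (i : ℕ) : ℤ :=
  if i < p then u i else if i = p then y else u (i - 1)

theorem desInd_insOne_of_lt {p i : ℕ} {y : ℤ} {u : ℕ → ℤ} (h : i + 1 < p) :
    desInd (insOne p y u) i = desInd u i := by
  simp [desInd, insOne, h, show i < p by omega]

theorem desInd_insOne_add_one {p i : ℕ} {y : ℤ} {u : ℕ → ℤ} (h : p ≤ i) :
    desInd (insOne p y u) (i + 1) = desInd u i := by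
  rcases h.eq_or_lt with rfl | h
  · simp [desInd, insOne, show ¬ p + 1 + 1 < p by omega, show p + 1 + 1 ≠ p by omega]
  · simp [desInd, insOne, show ¬ i + 1 < p by omega, show ¬ i + 1 + 1 < p by omega,
      show i + 1 ≠ p by omega, show i + 1 + 1 ≠ p by omega]

theorem sum_desInd_insOne_zero (m : ℕ) (y : ℤ) (u : ℕ → ℤ) :
    ∑ i ∈ range (m + 1), desInd (insOne 0 y u) i =
      ∑ i ∈ range m, desInd u i + if u 0 < y then 1 else 0 := by
  rw [sum_range_succ', sum_congr rfl fun i _ => desInd_insOne_add_one (Nat.zero_le i)]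
  simp [desInd, insOne]

theorem sum_desInd_insOne_last (m : ℕ) (y : ℤ) (u : ℕ → ℤ) :
    ∑ i ∈ range (m + 1), desInd (insOne (m + 1) y u) i =
      ∑ i ∈ range m, desInd u i + if y < u m then 1 else 0 := by
  rw [sum_range_succ, sum_congr rfl fun i hi =>
    desInd_insOne_of_lt (by have := mem_range.1 hi; omega)]
  simp [desInd, insOne]

theorem sum_desInd_insOne_succ {y : ℤ} {u : ℕ → ℤ} (hy : (∀ i, u i < y) ∨ ∀ i, y < u i)
    {q m : ℕ} (hq : q < m) :
    ∑ i ∈ range (m + 1), desInd (insOne (q + 1) y u) i + desInd u q =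
      ∑ i ∈ range m, desInd u i + 1 := by
  induction m, hq using Nat.le_induction with
  | base =>
    have h : desInd (insOne (q + 1) y u) q + desInd (insOne (q + 1) y u) (q + 1) = 1 := by
      rcases hy with hy | hy
      · simp [desInd, insOne, hy, (hy _).le]
      · simp [desInd, insOne, hy, (hy _).le]
    rw [Nat.succ_eq_add_one, sum_range_succ, sum_range_succ, sum_range_succ _ q,
      sum_congr rfl fun i hi => desInd_insOne_of_lt (by have := mem_range.1 hi; omega)]
    omega
  | succ m hm ih =>
    rw [sum_range_succ _ (m + 1), sum_range_succ (desInd u) m, desInd_insOne_add_one hm]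
    omega

theorem desInd_le_one (u : ℕ → ℤ) (i : ℕ) : desInd u i ≤ 1 := by
  unfold desInd; split_ifs <;> omega

/-- Indicator of a negative first letter. -/
def negInd (u : ℕ → ℤ) : ℕ :=
  if u 0 < 0 then 1 else 0

theorem negInd_insOne_succ (q : ℕ) (y : ℤ) (u : ℕ → ℤ) :
    negInd (insOne (q + 1) y u) = negInd u := by
  simp [negInd, insOne]

theorem sum_pow_insOne {R : Type*} [CommRing R] (x : R) {M : ℤ} {u : ℕ → ℤ}
    (hM : ∀ i, |u i| < M) (m : ℕ) :
    ∑ p ∈ range (m + 2), ∑ b : Bool,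
        x ^ (2 * ∑ i ∈ range (m + 1), desInd (insOne p (if b then -M else M) u) i +
          negInd (insOne p (if b then -M else M) u)) =
      x ^ (2 * ∑ i ∈ range m, desInd u i + negInd u) *
        (1 + x + 2 * (m + 1) * x ^ 2 +
          (2 * ∑ i ∈ range m, desInd u i + negInd u : ℕ) * (1 - x ^ 2)) := by
  have hlt (i : ℕ) : u i < M := (abs_lt.1 (hM i)).2
  have hgt (i : ℕ) : -M < u i := (abs_lt.1 (hM i)).1
  have hpos : 0 < M := (abs_nonneg _).trans_lt (hM 0)
  have hsum (b : Bool) :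
      ∑ p ∈ range (m + 2), x ^ (2 * ∑ i ∈ range (m + 1),
          desInd (insOne p (if b then -M else M) u) i + negInd (insOne p (if b then -M else M) u)) =
        x ^ (2 * ∑ i ∈ range m, desInd u i) *
            (m * x ^ 2 + (∑ i ∈ range m, desInd u i : ℕ) * (1 - x ^ 2)) * x ^ negInd u +
          x ^ (2 * (∑ i ∈ range m, desInd u i + if b then 0 else 1) + if b then 1 else 0) +
          x ^ (2 * (∑ i ∈ range m, desInd u i + if b then 1 else 0) + negInd u) := by
    have hmid (q : ℕ) (hq : q ∈ range m) :=
      pow_two_mul_of_add_eq x (desInd_le_one u q) (sum_desInd_insOne_succ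
        (y := if b then -M else M) (u := u) (by cases b <;> simp [hlt, hgt]) (mem_range.1 hq))
    rw [sum_range_succ, sum_desInd_insOne_last, sum_range_succ', sum_desInd_insOne_zero]
    simp only [negInd_insOne_succ, pow_add _ _ (negInd u), ← sum_mul]
    rw [sum_congr rfl hmid, ← mul_sum, sum_add_distrib, ← sum_mul, ← Nat.cast_sum]
    cases b <;> simp [negInd, insOne, hlt, hgt, (hlt m).not_gt, (hgt 0).not_gt, hpos,
      hpos.not_gt]
  have hn : negInd u = 0 ∨ negInd u = 1 := by unfold negInd; split_ifs <;> simp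
  rw [sum_comm, Fintype.sum_bool, hsum, hsum]
  simp only [if_true, if_false, Bool.false_eq_true]
  rcases hn with hn | hn <;> rw [hn] <;> push_cast <;> ring

/-! ### Stirling permutations -/

section StirlingPermutations

variable {n : ℕ}

/-- The position in the word `insMax p σ` of the letter at position `i` of `σ`. -/
def skipPair (p : Fin (2 * n + 1)) (i : Fin (2 * n)) : Fin (2 * (n + 1)) :=
  ⟨if (i : ℕ) < p then i else i + 2, by split_ifs <;> omega⟩

/-- The word `σ` with two copies of the letter `n + 1` inserted in front of position `p`. -/
def insMax (p : Fin (2 * n + 1)) (σ : Fin (2 * n) → Fin (n + 1)) (i : Fin (2 * (n + 1))) :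
    Fin (n + 1 + 1) :=
  if h : (i : ℕ) < p then (σ ⟨i, by omega⟩).castSucc
  else if h' : (i : ℕ) < p + 2 then Fin.last (n + 1)
  else (σ ⟨i - 2, by omega⟩).castSucc

theorem skipPair_lt_skipPair (p : Fin (2 * n + 1)) {i j : Fin (2 * n)} :
    skipPair p i < skipPair p j ↔ i < j := by
  simp only [skipPair, Fin.lt_def]
  split_ifs <;> omega

theorem skipPair_injective (p : Fin (2 * n + 1)) : Function.Injective (skipPair p) := by
  intro i j h
  simp only [skipPair, Fin.mk.injEq] at h
  split_ifs at h <;> omega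

theorem insMax_skipPair (p : Fin (2 * n + 1)) (σ : Fin (2 * n) → Fin (n + 1)) (i : Fin (2 * n)) :
    insMax p σ (skipPair p i) = (σ i).castSucc := by
  by_cases h : (i : ℕ) < p
  · simp [insMax, skipPair, h]
  · simp [insMax, skipPair, h, show ¬ (i : ℕ) + 2 < p by omega]

theorem eq_or_eq_or_exists_skipPair (p : Fin (2 * n + 1)) (i : Fin (2 * (n + 1))) :
    ((i : ℕ) = p ∨ (i : ℕ) = p + 1) ∨ ∃ j, skipPair p j = i := by
  by_cases h : (i : ℕ) < p
  · exact .inr ⟨⟨i, by omega⟩, by simp [skipPair, h]⟩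
  by_cases h' : (i : ℕ) < p + 2
  · left; omega
  · exact .inr ⟨⟨i - 2, by omega⟩, by
      ext; simp [skipPair, show ¬ (i : ℕ) - 2 < p by omega]; omega⟩

theorem insMax_eq_last_iff {p : Fin (2 * n + 1)} {σ : Fin (2 * n) → Fin (n + 1)}
    {i : Fin (2 * (n + 1))} :
    insMax p σ i = Fin.last (n + 1) ↔ (i : ℕ) = p ∨ (i : ℕ) = p + 1 := by
  unfold insMax
  split_ifs with h h'
  · simp only [Fin.castSucc_ne_last, false_iff]; omega
  · simp only [true_iff]; omega
  · simp only [Fin.castSucc_ne_last, false_iff]; omega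

theorem insMax_injective {p q : Fin (2 * n + 1)} {σ τ : Fin (2 * n) → Fin (n + 1)}
    (h : insMax p σ = insMax q τ) : p = q ∧ σ = τ := by
  have hpq : p = q := by
    have h1 := insMax_eq_last_iff (σ := τ) (p := q) (i := ⟨p, by omega⟩)
    have h2 := insMax_eq_last_iff (σ := σ) (p := p) (i := ⟨q, by omega⟩)
    rw [← h, insMax_eq_last_iff] at h1
    rw [h, insMax_eq_last_iff] at h2
    simp only [true_or, true_iff] at h1 h2
    omega
  subst hpq
  refine ⟨rfl, funext fun i => Fin.castSucc_injective _ ?_⟩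
  rw [← insMax_skipPair p, ← insMax_skipPair p, h]

theorem card_filter_insMax_last (p : Fin (2 * n + 1)) (σ : Fin (2 * n) → Fin (n + 1)) :
    #{i | insMax p σ i = Fin.last (n + 1)} = 2 := by
  rw [card_eq_two]
  refine ⟨⟨p, by omega⟩, ⟨p + 1, by omega⟩, by simp, ?_⟩
  ext i
  rw [mem_filter_univ, insMax_eq_last_iff]
  simp [Fin.ext_iff]

theorem card_filter_insMax_castSucc (p : Fin (2 * n + 1)) (σ : Fin (2 * n) → Fin (n + 1))
    (v : Fin (n + 1)) :
    #{i | insMax p σ i = v.castSucc} = #{i | σ i = v} := by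
  symm
  refine card_bij (fun i _ => skipPair p i) ?_ (fun i _ j _ h => skipPair_injective p h) ?_
  · simp [insMax_skipPair]
  · intro i hi
    rcases eq_or_eq_or_exists_skipPair p i with h | ⟨j, rfl⟩
    · rw [← insMax_eq_last_iff (σ := σ)] at h
      simp [h, (Fin.castSucc_ne_last v).symm] at hi
    · exact ⟨j, by simpa [insMax_skipPair] using hi, rfl⟩

theorem insMax_mem_stirlingSet_iff {p : Fin (2 * n + 1)} {σ : Fin (2 * n) → Fin (n + 1)} :
    insMax p σ ∈ StirlingSet (n + 1) ↔ σ ∈ StirlingSet n := by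
  simp only [StirlingSet, mem_filter, mem_univ, true_and]
  refine and_congr ?_ ?_
  · rw [Fin.forall_fin_succ']
    simp [card_filter_insMax_castSucc, card_filter_insMax_last]
  · constructor
    · intro h i j k hij hjk hik
      simpa [insMax_skipPair] using h (skipPair p i) (skipPair p j) (skipPair p k)
        ((skipPair_lt_skipPair p).2 hij) ((skipPair_lt_skipPair p).2 hjk)
        (by rw [insMax_skipPair, insMax_skipPair, hik])
    · intro h i j k hij hjk hik
      rcases eq_or_eq_or_exists_skipPair p i with hi | ⟨i, rfl⟩
      · have hk := insMax_eq_last_iff.1 (hik ▸ insMax_eq_last_iff.2 hi)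
        omega
      rcases eq_or_eq_or_exists_skipPair p j with hj | ⟨j, rfl⟩
      · rw [insMax_eq_last_iff.2 hj, insMax_skipPair]
        exact Fin.castSucc_lt_last _
      rcases eq_or_eq_or_exists_skipPair p k with hk | ⟨k, rfl⟩
      · rw [insMax_eq_last_iff.2 hk, insMax_skipPair] at hik
        exact absurd hik (Fin.castSucc_ne_last _)
      simp only [insMax_skipPair, Fin.castSucc_lt_castSucc_iff, Fin.castSucc_inj,
        skipPair_lt_skipPair] at *
      exact h i j k hij hjk hik

theorem exists_insMax_eq {τ : Fin (2 * (n + 1)) → Fin (n + 1 + 1)} (hτ : τ ∈ StirlingSet (n + 1)) :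
    ∃ p σ, insMax (n := n) p σ = τ := by
  simp only [StirlingSet, mem_filter, mem_univ, true_and] at hτ
  obtain ⟨hcard, hnest⟩ := hτ
  obtain ⟨a, b, hab, hset⟩ := card_eq_two.1 (hcard (Fin.last _) (by simp))
  wlog hlt : a < b generalizing a b
  · exact this b a hab.symm (by rw [hset, pair_comm]) (lt_of_le_of_ne (not_lt.1 hlt) hab.symm)
  have hlast (i) : τ i = Fin.last (n + 1) ↔ i = a ∨ i = b := by
    simpa using Finset.ext_iff.1 hset i
  have hb : (b : ℕ) = a + 1 := by
    by_contra hne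
    refine (Fin.le_last (τ ⟨a + 1, by omega⟩)).not_gt ?_
    rw [← (hlast a).2 (.inl rfl)]
    refine hnest a ⟨a + 1, by omega⟩ b ?_ ?_ (((hlast a).2 (.inl rfl)).trans
      ((hlast b).2 (.inr rfl)).symm)
    · simp [Fin.lt_def]
    · rw [Fin.lt_def] at hlt ⊢
      simp only
      omega
  let p : Fin (2 * n + 1) := ⟨a, by omega⟩
  have hne (i : Fin (2 * n)) : τ (skipPair p i) ≠ Fin.last (n + 1) := by
    rw [Ne, hlast, Fin.ext_iff, Fin.ext_iff, hb]
    simp only [skipPair, p]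
    split_ifs <;> omega
  refine ⟨p, fun i => (τ (skipPair p i)).castPred (hne i), funext fun i => ?_⟩
  rcases eq_or_eq_or_exists_skipPair p i with hi | ⟨j, rfl⟩
  · rw [insMax_eq_last_iff.2 hi, eq_comm, hlast, Fin.ext_iff, Fin.ext_iff, hb]
    exact hi
  · rw [insMax_skipPair, Fin.castSucc_castPred]

theorem sum_stirlingSet_succ {R : Type*} [AddCommMonoid R]
    (f : (Fin (2 * (n + 1)) → Fin (n + 1 + 1)) → R) :
    ∑ τ ∈ StirlingSet (n + 1), f τ = ∑ σ ∈ StirlingSet n, ∑ p, f (insMax p σ) := by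
  rw [← sum_product' (StirlingSet n) univ fun σ p => f (insMax p σ)]
  symm
  refine sum_nbij (fun a => insMax a.2 a.1) ?_ ?_ ?_ fun _ _ => rfl
  · rintro ⟨σ, p⟩ h
    exact insMax_mem_stirlingSet_iff.2 (mem_product.1 h).1
  · rintro ⟨σ, p⟩ - ⟨τ, q⟩ - h
    obtain ⟨rfl, rfl⟩ := insMax_injective h
    rfl
  · intro τ hτ
    obtain ⟨p, σ, rfl⟩ := exists_insMax_eq (mem_coe.1 hτ)
    exact ⟨(σ, p), by simpa [insMax_mem_stirlingSet_iff] using hτ, rfl⟩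

/-- The word of a Stirling permutation, indexed from `0` and extended by `0`. -/
def stirlingWord (σ : Fin (2 * n) → Fin (n + 1)) (i : ℕ) : ℕ :=
  sval σ (i + 1)

theorem stirlingWord_lt (σ : Fin (2 * n) → Fin (n + 1)) (i : ℕ) : stirlingWord σ i < n + 1 := by
  unfold stirlingWord sval
  split_ifs <;> omega

theorem stirlingWord_eq_zero (σ : Fin (2 * n) → Fin (n + 1)) (i : ℕ) (h : 2 * n ≤ i) :
    stirlingWord σ i = 0 := by
  unfold stirlingWord sval
  rw [dif_neg (by omega)]

theorem stirlingWord_of_lt (σ : Fin (2 * n) → Fin (n + 1)) {i : ℕ} (h : i < 2 * n) :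
    stirlingWord σ i = σ ⟨i, h⟩ := by
  unfold stirlingWord sval
  rw [dif_pos (by omega)]
  rfl

theorem stirlingWord_insMax (p : Fin (2 * n + 1)) (σ : Fin (2 * n) → Fin (n + 1)) :
    stirlingWord (insMax p σ) = insPair p (n + 1) (stirlingWord σ) := by
  funext i
  by_cases hi : i < 2 * (n + 1)
  · rw [stirlingWord_of_lt _ hi, insMax, insPair]
    dsimp only
    split_ifs with h h'
    · rw [stirlingWord_of_lt _ (by omega), Fin.val_castSucc]
    · simp
    · rw [stirlingWord_of_lt _ (by omega), Fin.val_castSucc]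
  · rw [stirlingWord_eq_zero _ _ (by omega), insPair, if_neg (by omega), if_neg (by omega),
      stirlingWord_eq_zero _ _ (by omega)]

theorem apQ_eq_sum (σ : Fin (2 * n) → Fin (n + 1)) :
    apQ σ = ∑ i ∈ range (2 * n), apInd (stirlingWord σ) i := by
  simp only [apInd, ← card_filter, apQ]
  refine card_nbij' (· - 2) (· + 2) ?_ ?_ ?_ ?_
  · intro i hi
    simp only [coe_filter, mem_Icc, Set.mem_ofPred_eq, stirlingWord] at hi ⊢
    obtain ⟨⟨h1, h2⟩, h3⟩ := hi
    obtain ⟨j, rfl⟩ := Nat.exists_eq_add_of_le' h1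
    exact mem_filter.2 ⟨mem_range.2 (by omega), h3⟩
  · intro i hi
    simp only [coe_filter, mem_Icc, Set.mem_ofPred_eq, mem_range] at hi ⊢
    refine ⟨⟨by omega, ?_⟩, hi.2⟩
    by_contra h
    have := stirlingWord_eq_zero σ (i + 2) (by omega)
    omega
  · intro i hi
    simp only [coe_filter, mem_Icc, Set.mem_ofPred_eq] at hi
    simp only
    omega
  · intro i _
    simp

theorem fapQ_eq_sum (σ : Fin (2 * n) → Fin (n + 1)) :
    fapQ σ = 2 * ∑ i ∈ range (2 * n), apInd (stirlingWord σ) i +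
      initInd (2 * n) (stirlingWord σ) := by
  simp only [fapQ, apQ_eq_sum, initInd, stirlingWord, zero_add,
    show (0 < 2 * n) = (1 ≤ n) from propext (by omega)]
  split_ifs <;> rfl

open Polynomial in
theorem X_mul_derivative_X_pow {R : Type*} [CommRing R] (f : ℕ) :
    (Polynomial.X : R[X]) * derivative (Polynomial.X ^ f) = (f : R[X]) * Polynomial.X ^ f := by
  cases f with
  | zero => simp
  | succ f => simp only [derivative_X_pow, map_natCast, add_tsub_cancel_right]; ring

/-- The generating polynomial of `2 * apQ` on Stirling permutations. -/
noncomputable def apPoly (n : ℕ) : Polynomial ℤ :=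
  ∑ σ ∈ StirlingSet n, Polynomial.X ^ (2 * apQ σ)

/-- The generating polynomial of `fapQ` on Stirling permutations. -/
noncomputable def fapPoly (n : ℕ) : Polynomial ℤ :=
  ∑ σ ∈ StirlingSet n, Polynomial.X ^ fapQ σ

open Polynomial in
theorem apPoly_succ (n : ℕ) :
    apPoly (n + 1) =
      (1 + 2 * (n : ℤ[X]) * Polynomial.X ^ 2) * apPoly n +
        Polynomial.X * (1 - Polynomial.X ^ 2) * derivative (apPoly n) := by
  simp only [apPoly, sum_stirlingSet_succ, derivative_sum, mul_sum, ← sum_add_distrib]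
  refine sum_congr rfl fun σ _ => ?_
  have h := sum_pow_insPair (Polynomial.X : ℤ[X]) (stirlingWord_lt σ) (stirlingWord_eq_zero σ)
  rw [← Fin.sum_univ_eq_sum_range
    (fun p => Polynomial.X ^ (2 * ∑ i ∈ range (2 * n + 2), apInd (insPair p _ _) i))] at h
  simp only [← stirlingWord_insMax] at h
  rw [mul_right_comm Polynomial.X, X_mul_derivative_X_pow]
  simp only [apQ_eq_sum]
  refine h.trans ?_
  push_cast
  ring

open Polynomial in
theorem fapPoly_succ (n : ℕ) :
    fapPoly (n + 1) =
      (Polynomial.X + 2 * (n : ℤ[X]) * Polynomial.X ^ 2) * fapPoly n +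
        Polynomial.X * (1 - Polynomial.X ^ 2) * derivative (fapPoly n) := by
  simp only [fapPoly, sum_stirlingSet_succ, derivative_sum, mul_sum, ← sum_add_distrib]
  refine sum_congr rfl fun σ _ => ?_
  have h := sum_pow_insPair_initInd (Polynomial.X : ℤ[X])
    (stirlingWord_lt σ) (stirlingWord_eq_zero σ)
  rw [← Fin.sum_univ_eq_sum_range (fun p => Polynomial.X ^ (2 * ∑ i ∈ range (2 * n + 2),
    apInd (insPair p _ _) i + initInd (2 * n + 2) (insPair p _ _)))] at h
  simp only [← stirlingWord_insMax] at h
  rw [mul_right_comm Polynomial.X, X_mul_derivative_X_pow]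
  simp only [fapQ_eq_sum]
  refine h.trans ?_
  push_cast
  ring

end StirlingPermutations

/-! ### Signed permutations -/

section SignedPermutations

variable {n : ℕ}

/-- The permutation `σ` with the new maximal value inserted in front of position `p`. -/
def insPerm (p : Fin (n + 1)) (σ : Equiv.Perm (Fin n)) : Equiv.Perm (Fin (n + 1)) :=
  (finSuccEquiv' p).trans ((Equiv.optionCongr σ).trans finSuccEquivLast.symm)

theorem insPerm_self (p : Fin (n + 1)) (σ : Equiv.Perm (Fin n)) :
    insPerm p σ p = Fin.last n := by
  simp [insPerm]

theorem insPerm_succAbove (p : Fin (n + 1)) (σ : Equiv.Perm (Fin n)) (i : Fin n) :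
    insPerm p σ (p.succAbove i) = (σ i).castSucc := by
  simp [insPerm]

/-- The signed permutation `π` with the letter `n + 1`, negated if `b` holds, inserted in front
of position `p`. -/
def insSigned (p : Fin (n + 1)) (b : Bool) (π : SignedPerm n) : SignedPerm (n + 1) :=
  (insPerm p π.1, p.insertNth (α := fun _ => Bool) b π.2)

theorem insSigned_bijective : Function.Bijective
    fun a : SignedPerm n × Fin (n + 1) × Bool => insSigned a.2.1 a.2.2 a.1 := by
  rw [Fintype.bijective_iff_injective_and_card]
  constructor
  · rintro ⟨⟨σ, s⟩, p, b⟩ ⟨⟨τ, t⟩, q, c⟩ h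
    obtain ⟨h1, h2⟩ := Prod.ext_iff.1 h
    simp only [insSigned] at h1 h2
    obtain rfl : p = q := (insPerm p σ).injective (by rw [insPerm_self, h1, insPerm_self])
    obtain rfl : σ = τ := Equiv.ext fun i => Fin.castSucc_injective _ (by
      rw [← insPerm_succAbove p, ← insPerm_succAbove p, h1])
    obtain ⟨rfl, rfl⟩ := Fin.insertNth_inj.1 h2
    rfl
  · simp [Fintype.card_perm, Nat.factorial_succ, pow_succ]
    ring

theorem sum_signedPerm_succ {R : Type*} [AddCommMonoid R] (f : SignedPerm (n + 1) → R) :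
    ∑ ρ, f ρ = ∑ π : SignedPerm n, ∑ p, ∑ b, f (insSigned p b π) := by
  rw [← insSigned_bijective.sum_comp f, Fintype.sum_prod_type]
  exact sum_congr rfl fun π _ => Fintype.sum_prod_type _

/-- The word of a signed permutation, indexed from `0` and extended by `0`. -/
def signedWord (π : SignedPerm n) (i : ℕ) : ℤ :=
  bval π (i + 1)

theorem signedWord_of_lt (π : SignedPerm n) {i : ℕ} (h : i < n) :
    signedWord π i = if π.2 ⟨i, h⟩ then -((π.1 ⟨i, h⟩ : ℤ) + 1) else (π.1 ⟨i, h⟩ : ℤ) + 1 := by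
  unfold signedWord bval
  rw [dif_pos (by omega)]
  rfl

theorem signedWord_of_le (π : SignedPerm n) {i : ℕ} (h : n ≤ i) : signedWord π i = 0 := by
  unfold signedWord bval
  rw [dif_neg (by omega)]

theorem abs_signedWord_lt (π : SignedPerm n) (i : ℕ) : |signedWord π i| < (n : ℤ) + 1 := by
  rcases lt_or_ge i n with h | h
  · rw [signedWord_of_lt π h, abs_lt]
    split_ifs <;> omega
  · rw [signedWord_of_le π h, abs_zero]
    omega

theorem signedWord_insSigned_succAbove (p : Fin (n + 1)) (b : Bool) (π : SignedPerm n) (i : Fin n) :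
    signedWord (insSigned p b π) (p.succAbove i) = signedWord π i := by
  rw [signedWord_of_lt _ (p.succAbove i).isLt, signedWord_of_lt _ i.isLt]
  simp [insSigned, insPerm_succAbove]

theorem signedWord_insSigned (p : Fin (n + 1)) (b : Bool) (π : SignedPerm n) :
    signedWord (insSigned p b π) =
      insOne p (if b then -((n : ℤ) + 1) else (n : ℤ) + 1) (signedWord π) := by
  funext i
  rcases lt_trichotomy i p with h | rfl | h
  · rw [insOne, if_pos h, ← signedWord_insSigned_succAbove p b π ⟨i, by omega⟩,
      Fin.succAbove_of_castSucc_lt _ _ (by simpa [Fin.lt_def] using h)]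
    rfl
  · rw [insOne, if_neg (lt_irrefl _), if_pos rfl, signedWord_of_lt _ p.isLt]
    simp [insSigned, insPerm_self]
  · rw [insOne, if_neg h.not_gt, if_neg h.ne']
    rcases lt_or_ge i (n + 1) with hi | hi
    · rw [← signedWord_insSigned_succAbove p b π ⟨i - 1, by omega⟩,
        Fin.succAbove_of_le_castSucc _ _ (by simp only [Fin.le_def, Fin.castSucc_mk]; omega)]
      congr 1
      simp only [Fin.succ_mk]
      omega
    · rw [signedWord_of_le _ hi, signedWord_of_le _ (by omega)]

theorem desA_eq_sum (π : SignedPerm n) :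
    desA π = ∑ i ∈ range (n - 1), desInd (signedWord π) i := by
  simp only [desInd, ← card_filter, desA]
  refine card_nbij' (· - 1) (· + 1) ?_ ?_ ?_ ?_
  · intro i hi
    simp only [coe_filter, mem_Icc, Set.mem_ofPred_eq] at hi ⊢
    obtain ⟨⟨h1, h2⟩, h3⟩ := hi
    obtain ⟨j, rfl⟩ := Nat.exists_eq_add_of_le' h1
    exact ⟨mem_range.2 (by omega), h3⟩
  · intro i hi
    simp only [coe_filter, mem_Icc, Set.mem_ofPred_eq, mem_range] at hi ⊢
    exact ⟨by omega, hi.2⟩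
  · intro i hi
    simp only [coe_filter, mem_Icc, Set.mem_ofPred_eq] at hi
    simp only
    omega
  · intro i _
    simp

theorem fdes_eq_sum (π : SignedPerm n) :
    fdes π = 2 * ∑ i ∈ range (n - 1), desInd (signedWord π) i + negInd (signedWord π) := by
  simp only [fdes, desA_eq_sum, negInd, signedWord, zero_add]
  split_ifs <;> rfl

/-- The generating polynomial of `fdes` on signed permutations. -/
noncomputable def fdesPoly (n : ℕ) : Polynomial ℤ :=
  ∑ π : SignedPerm n, Polynomial.X ^ fdes π

theorem fdesPoly_zero : fdesPoly 0 = 1 := by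
  simp [fdesPoly, fdes, bval, desA]

theorem fdesPoly_one : fdesPoly 1 = 1 + Polynomial.X := by
  rw [fdesPoly, sum_signedPerm_succ]
  simp [fdes_eq_sum, signedWord_insSigned, negInd, insOne, add_comm]

open Polynomial in
theorem fdesPoly_succ_succ (m : ℕ) :
    fdesPoly (m + 1 + 1) =
      (1 + Polynomial.X + 2 * (m + 1 : ℤ[X]) * Polynomial.X ^ 2) * fdesPoly (m + 1) +
        Polynomial.X * (1 - Polynomial.X ^ 2) * derivative (fdesPoly (m + 1)) := by
  rw [fdesPoly, sum_signedPerm_succ]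
  simp only [fdesPoly, derivative_sum, mul_sum, ← sum_add_distrib]
  refine sum_congr rfl fun π _ => ?_
  have h := sum_pow_insOne (Polynomial.X : ℤ[X]) (abs_signedWord_lt π) m
  rw [← Fin.sum_univ_eq_sum_range (fun p => ∑ b : Bool, Polynomial.X ^
    (2 * ∑ i ∈ range (m + 1), desInd (insOne p (if b then _ else _) _) i +
      negInd (insOne p (if b then _ else _) _)))] at h
  simp only [← signedWord_insSigned] at h
  rw [mul_right_comm Polynomial.X, X_mul_derivative_X_pow]
  simp only [fdes_eq_sum]
  refine h.trans ?_
  simp only [add_tsub_cancel_right]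
  ring

open Polynomial in
theorem fdesPoly_succ (n : ℕ) :
    fdesPoly (n + 1) = (1 + Polynomial.X + 2 * (n : ℤ[X]) * Polynomial.X ^ 2) * fdesPoly n +
      Polynomial.X * (1 - Polynomial.X ^ 2) * derivative (fdesPoly n) := by
  cases n with
  | zero => simp [fdesPoly_zero, fdesPoly_one]
  | succ m => rw [fdesPoly_succ_succ]; push_cast; ring

end SignedPermutations

/-! ### Binomial convolution -/

theorem sum_choose_mul_succ {R : Type*} [CommSemiring R] (f g : ℕ → R) (n : ℕ) :
    ∑ k ∈ range (n + 2), ((n + 1).choose k : R) * f k * g (n + 1 - k) =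
      ∑ k ∈ range (n + 1), (n.choose k : R) * (f (k + 1) * g (n - k) + f k * g (n - k + 1)) := by
  have h := sum_antidiagonal_choose_succ_mul (fun i j => f i * g j) n
  rw [Nat.sum_antidiagonal_eq_sum_range_succ fun i j => ((n + 1).choose i : R) * (f i * g j),
    Nat.sum_antidiagonal_eq_sum_range_succ fun i j => (n.choose i : R) * (f i * g (j + 1)),
    Nat.sum_antidiagonal_eq_sum_range_succ fun i j => (n.choose j : R) * (f (i + 1) * g j)] at h
  simp only [mul_assoc, mul_add, sum_add_distrib]
  rw [h, add_comm]
  congr 1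
  exact sum_congr rfl fun k hk => by rw [Nat.choose_symm (by have := mem_range.1 hk; omega)]

theorem apPoly_zero : apPoly 0 = 1 := by
  simp [apPoly, StirlingSet, apQ]

theorem fapPoly_zero : fapPoly 0 = 1 := by
  simp [fapPoly, StirlingSet, fapQ, apQ]

open Polynomial in
theorem fdesPoly_eq_sum (n : ℕ) :
    fdesPoly n = ∑ k ∈ range (n + 1), (n.choose k : ℤ[X]) * fapPoly k * apPoly (n - k) := by
  induction n with
  | zero => simp [fdesPoly_zero, apPoly_zero, fapPoly_zero]
  | succ n ih =>
    rw [fdesPoly_succ, sum_choose_mul_succ, ih, derivative_sum, mul_sum, mul_sum,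
      ← sum_add_distrib]
    refine sum_congr rfl fun k hk => ?_
    have hn : (n : ℤ[X]) = k + (n - k : ℕ) := by
      rw [← Nat.cast_add, Nat.add_sub_cancel' (by have := mem_range.1 hk; omega)]
    rw [apPoly_succ, fapPoly_succ, hn]
    simp only [derivative_mul, derivative_natCast]
    ring

theorem statement_6 (n : ℕ) :
    (∑ π : SignedPerm n, (Polynomial.X : Polynomial ℤ) ^ fdes π) =
      ∑ k ∈ Finset.range (n + 1), (n.choose k : Polynomial ℤ) *
        (∑ σ ∈ StirlingSet k, (Polynomial.X : Polynomial ℤ) ^ fapQ σ) *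
        (∑ σ ∈ StirlingSet (n - k), (Polynomial.X : Polynomial ℤ) ^ (2 * apQ σ)) := by
  exact fdesPoly_eq_sum n
end

section
/- Let T(n,k) be the number of Stirling permutations σ ∈ Q_n with fap(σ) = k (and set T(n,k) = 0 for k < 0). Then for all n ≥ 0 and all integers k ≥ 0, T(n+1,k) = k·T(n,k) + T(n,k−1) + (2n−k+2)·T(n,k−2), with initial conditions T(0,0) = 1 and T(1,1) = 1, T(1,k) = 0 for k ≠ 1. -/
open Finset MvPolynomial

/-- `T(n,k)`: the number of Stirling permutations of order `n` with flag
ascent-plateau number `k`, extended by `0` for negative `k`. -/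
def Tnum (n : ℕ) (k : ℤ) : ℤ :=
  if 0 ≤ k then ((StirlingSet n).filter (fun σ => (fapQ σ : ℤ) = k)).card else 0

/-- Inserts two adjacent copies of the new largest letter `n + 1` after the first `p` letters. -/
def insertMax {n : ℕ} (σ : Fin (2*n) → Fin (n+1)) (p : ℕ) :
    Fin (2*(n+1)) → Fin (n+1+1) := fun i =>
  ⟨if (i : ℕ) + 1 ≤ p then sval σ (i + 1) else
    if (i : ℕ) + 1 ≤ p + 2 then n + 1 else sval σ (i + 1 - 2), by
      have h (j : ℕ) : sval σ j < n + 1 := by unfold sval; split_ifs <;> omega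
      have h₁ := h (i + 1)
      have h₂ := h (i + 1 - 2)
      split_ifs <;> omega⟩

/-- Deletes the letters at positions `p + 1` and `p + 2`. -/
def deletePair {n : ℕ} (τ : Fin (2*(n+1)) → Fin (n+1+1)) (p : ℕ) :
    Fin (2*n) → Fin (n+1) := fun i =>
  ⟨min n (if (i : ℕ) + 1 ≤ p then sval τ (i + 1) else sval τ (i + 3)), by omega⟩

/-- The position in `insertMax σ p` of the letter at position `i` of `σ`. -/
def shiftPos (p i : ℕ) : ℕ := if i ≤ p then i else i + 2

theorem shiftPos_injective (p : ℕ) : Function.Injective (shiftPos p) := by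
  intro i j h
  unfold shiftPos at h
  split_ifs at h <;> omega

theorem sval_le {n : ℕ} (σ : Fin (2*n) → Fin (n+1)) (i : ℕ) : sval σ i ≤ n := by
  unfold sval
  split_ifs <;> omega

theorem sval_add_one {n : ℕ} (σ : Fin (2*n) → Fin (n+1)) (i : Fin (2*n)) :
    sval σ (i + 1) = σ i := by
  have h : 1 ≤ (i : ℕ) + 1 ∧ (i : ℕ) + 1 ≤ 2 * n := by omega
  simp [sval, h]

theorem eq_of_sval_eq {n : ℕ} {σ τ : Fin (2*n) → Fin (n+1)}
    (h : ∀ i, 1 ≤ i → i ≤ 2*n → sval σ i = sval τ i) : σ = τ := by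
  funext i
  apply Fin.ext
  rw [← sval_add_one, ← sval_add_one]
  exact h _ (by omega) (by omega)

theorem sval_of_lt {n : ℕ} (σ : Fin (2*n) → Fin (n+1)) {i : ℕ} (h : 2*n < i) :
    sval σ i = 0 := by
  rw [sval, dif_neg (by omega)]

theorem sval_insertMax {n : ℕ} (σ : Fin (2*n) → Fin (n+1)) {p : ℕ} (hp : p ≤ 2*n) (i : ℕ) :
    sval (insertMax σ p) i =
      if i ≤ p then sval σ i else if i ≤ p + 2 then n + 1 else sval σ (i - 2) := by
  rcases Nat.eq_zero_or_pos i with rfl | hi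
  · simp [sval]
  · by_cases h : i ≤ 2*(n+1)
    · rw [sval, dif_pos ⟨hi, h⟩]
      simp only [insertMax, Nat.sub_add_cancel hi]
    · rw [sval_of_lt _ (by omega), if_neg (by omega), if_neg (by omega),
        sval_of_lt _ (by omega)]

theorem sval_insertMax_shiftPos {n : ℕ} (σ : Fin (2*n) → Fin (n+1)) {p : ℕ} (hp : p ≤ 2*n)
    (i : ℕ) : sval (insertMax σ p) (shiftPos p i) = sval σ i := by
  rw [sval_insertMax σ hp]
  unfold shiftPos
  split_ifs <;> first | rfl | omega

theorem mem_StirlingSet_iff_sval {n : ℕ} (σ : Fin (2*n) → Fin (n+1)) :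
    σ ∈ StirlingSet n ↔
      (∀ v, 1 ≤ v → v ≤ n → ((Icc 1 (2*n)).filter (fun i => sval σ i = v)).card = 2) ∧
      ∀ i j k, 1 ≤ i → i < j → j < k → k ≤ 2*n → sval σ i = sval σ k →
        sval σ i < sval σ j := by
  have hcard (v : Fin (n+1)) : ((Icc 1 (2*n)).filter (fun i => sval σ i = (v : ℕ))).card =
      (univ.filter (fun i => σ i = v)).card := by
    symm
    refine card_bij (fun i _ => (i : ℕ) + 1) ?_ ?_ ?_
    · intro i hi
      simp only [mem_filter, mem_univ, true_and] at hi
      simp only [mem_filter, mem_Icc, sval_add_one, hi, and_true]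
      omega
    · intro i _ j _ h
      exact Fin.ext (by omega)
    · intro j hj
      simp only [mem_filter, mem_Icc] at hj
      refine ⟨⟨j - 1, by omega⟩, ?_, by simp only; omega⟩
      simp only [mem_filter, mem_univ, true_and]
      apply Fin.ext
      rw [← sval_add_one, ← hj.2]
      congr 1
      simp only
      omega
  simp only [StirlingSet, mem_filter, mem_univ, true_and]
  refine and_congr ⟨fun h v h₁ h₂ => ?_, fun h v hv => ?_⟩
    ⟨fun h i j k h₁ h₂ h₃ h₄ h₅ => ?_, fun h i j k h₁ h₂ h₃ => ?_⟩
  · exact (hcard ⟨v, by omega⟩).trans (h _ (by simp only; omega))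
  · rw [← hcard]
    exact h v (by omega) (by omega)
  · have e (m : ℕ) (hm : 1 ≤ m ∧ m ≤ 2*n) : sval σ m = σ ⟨m - 1, by omega⟩ := dif_pos hm
    rw [e i (by omega), e k (by omega)] at h₅
    rw [e i (by omega), e j (by omega)]
    exact h _ _ _ (Fin.mk_lt_mk.2 (by omega)) (Fin.mk_lt_mk.2 (by omega)) (Fin.ext h₅)
  · have := h (i+1) (j+1) (k+1) (by omega) (by omega) (by omega) (by omega)
    rw [sval_add_one, sval_add_one, sval_add_one] at this
    exact this (congrArg _ h₃)

theorem filter_insertMax_eq {n : ℕ} (σ : Fin (2*n) → Fin (n+1)) {p : ℕ} (hp : p ≤ 2*n)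
    {v : ℕ} (hv : v ≤ n) :
    (Icc 1 (2*(n+1))).filter (fun i => sval (insertMax σ p) i = v) =
      ((Icc 1 (2*n)).filter (fun i => sval σ i = v)).image (shiftPos p) := by
  ext i
  simp only [mem_filter, mem_image, mem_Icc]
  constructor
  · rintro ⟨hi, h⟩
    have hs := sval_insertMax σ hp i
    rw [h] at hs
    split_ifs at hs with h₁ h₂
    · exact ⟨i, ⟨by omega, hs.symm⟩, if_pos h₁⟩
    · omega
    · refine ⟨i - 2, ⟨by omega, hs.symm⟩, ?_⟩
      rw [shiftPos, if_neg (by omega)]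
      omega
  · rintro ⟨j, ⟨hj, h⟩, rfl⟩
    refine ⟨?_, by rw [sval_insertMax_shiftPos σ hp, h]⟩
    unfold shiftPos
    split_ifs <;> omega

theorem filter_insertMax_eq_max {n : ℕ} (σ : Fin (2*n) → Fin (n+1)) {p : ℕ} (hp : p ≤ 2*n) :
    (Icc 1 (2*(n+1))).filter (fun i => sval (insertMax σ p) i = n + 1) = {p + 1, p + 2} := by
  ext i
  simp only [mem_filter, mem_Icc, mem_insert, mem_singleton, sval_insertMax σ hp]
  have h₁ := sval_le σ i
  have h₂ := sval_le σ (i - 2)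
  split_ifs <;> omega

theorem insertMax_mem_StirlingSet_iff {n : ℕ} (σ : Fin (2*n) → Fin (n+1)) {p : ℕ}
    (hp : p ≤ 2*n) : insertMax σ p ∈ StirlingSet (n+1) ↔ σ ∈ StirlingSet n := by
  rw [mem_StirlingSet_iff_sval, mem_StirlingSet_iff_sval]
  refine and_congr ⟨fun h v h₁ h₂ => ?_, fun h v h₁ h₂ => ?_⟩
    ⟨fun h i j k h₁ h₂ h₃ h₄ h₅ => ?_, fun h i j k h₁ h₂ h₃ h₄ h₅ => ?_⟩
  · rw [← card_image_of_injective _ (shiftPos_injective p), ← filter_insertMax_eq σ hp h₂]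
    exact h v h₁ (by omega)
  · rcases Nat.lt_or_ge n v with hv | hv
    · obtain rfl : v = n + 1 := by omega
      rw [filter_insertMax_eq_max σ hp, card_pair (by omega)]
    · rw [filter_insertMax_eq σ hp hv, card_image_of_injective _ (shiftPos_injective p)]
      exact h v h₁ hv
  · have := h (shiftPos p i) (shiftPos p j) (shiftPos p k)
      (by unfold shiftPos; split_ifs <;> omega) (by unfold shiftPos; split_ifs <;> omega)
      (by unfold shiftPos; split_ifs <;> omega) (by unfold shiftPos; split_ifs <;> omega)
    simp only [sval_insertMax_shiftPos σ hp] at this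
    exact this h₅
  · have hi := sval_le σ i
    have hi' := sval_le σ (i - 2)
    have hk := sval_le σ k
    have hk' := sval_le σ (k - 2)
    rw [sval_insertMax σ hp, sval_insertMax σ hp] at h₅ ⊢
    have a₁ := h i j k
    have a₂ := h i j (k - 2)
    have a₃ := h i (j - 2) (k - 2)
    have a₄ := h (i - 2) (j - 2) (k - 2)
    split_ifs at * <;> omega

theorem insertMax_injOn {n : ℕ} {σ τ : Fin (2*n) → Fin (n+1)} {p q : ℕ} (hp : p ≤ 2*n)
    (hq : q ≤ 2*n) (h : insertMax σ p = insertMax τ q) : σ = τ ∧ p = q := by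
  have hpq : p = q := by
    have e := filter_insertMax_eq_max σ hp
    rw [h, filter_insertMax_eq_max τ hq] at e
    have h₁ : p + 1 ∈ ({q + 1, q + 2} : Finset ℕ) := by rw [e]; simp
    have h₂ : q + 1 ∈ ({p + 1, p + 2} : Finset ℕ) := by rw [← e]; simp
    simp only [mem_insert, mem_singleton] at h₁ h₂
    omega
  subst hpq
  refine ⟨eq_of_sval_eq fun i _ _ => ?_, rfl⟩
  rw [← sval_insertMax_shiftPos σ hp, h, sval_insertMax_shiftPos τ hp]

theorem sval_deletePair {n : ℕ} (τ : Fin (2*(n+1)) → Fin (n+1+1)) (p : ℕ) {i : ℕ}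
    (h₁ : 1 ≤ i) (h₂ : i ≤ 2*n) :
    sval (deletePair τ p) i = min n (if i ≤ p then sval τ i else sval τ (i + 2)) := by
  rw [sval, dif_pos ⟨h₁, h₂⟩]
  simp only [deletePair, Nat.sub_add_cancel h₁]
  rw [show i - 1 + 3 = i + 2 by omega]

theorem exists_insertMax_eq {n : ℕ} {τ : Fin (2*(n+1)) → Fin (n+1+1)}
    (hτ : τ ∈ StirlingSet (n+1)) :
    ∃ σ : Fin (2*n) → Fin (n+1), ∃ p ≤ 2*n, insertMax σ p = τ := by
  rw [mem_StirlingSet_iff_sval] at hτ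
  obtain ⟨hcard, hbetween⟩ := hτ
  have hmax := hcard (n+1) (by omega) le_rfl
  obtain ⟨a, b, hab, hset⟩ : ∃ a b, a < b ∧
      (Icc 1 (2*(n+1))).filter (fun i => sval τ i = n + 1) = {a, b} := by
    obtain ⟨a, b, hne, hset⟩ := card_eq_two.1 hmax
    rcases Nat.lt_or_gt_of_ne hne with h | h
    · exact ⟨a, b, h, hset⟩
    · exact ⟨b, a, h, by rw [hset, pair_comm]⟩
  have hmem (i : ℕ) : ((1 ≤ i ∧ i ≤ 2*(n+1)) ∧ sval τ i = n + 1) ↔ (i = a ∨ i = b) := by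
    simpa only [mem_filter, mem_Icc, mem_insert, mem_singleton] using
      Finset.ext_iff.1 hset i
  have ha := (hmem a).2 (Or.inl rfl)
  have hb := (hmem b).2 (Or.inr rfl)
  have hadj : b = a + 1 := by
    by_contra hne
    have := hbetween a (a+1) b (by omega) (by omega) (by omega) (by omega) (by omega)
    have := sval_le τ (a+1)
    omega
  subst hadj
  refine ⟨deletePair τ (a - 1), a - 1, by omega, eq_of_sval_eq fun i h₁ h₂ => ?_⟩
  have hi := hmem i
  have hle := sval_le τ i
  rw [sval_insertMax _ (by omega)]
  split_ifs with h₃ h₄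
  · rw [sval_deletePair _ _ (by omega) (by omega), if_pos h₃]
    omega
  · omega
  · rw [sval_deletePair _ _ (by omega) (by omega), if_neg (by omega),
      show i - 2 + 2 = i by omega]
    omega

theorem StirlingSet_succ (n : ℕ) :
    StirlingSet (n+1) =
      (StirlingSet n ×ˢ range (2*n+1)).image (fun x => insertMax x.1 x.2) := by
  ext τ
  simp only [mem_image, mem_product, mem_range, Prod.exists]
  constructor
  · intro hτ
    obtain ⟨σ, p, hp, rfl⟩ := exists_insertMax_eq hτ
    exact ⟨σ, p, ⟨(insertMax_mem_StirlingSet_iff σ hp).1 hτ, by omega⟩, rfl⟩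
  · rintro ⟨σ, p, ⟨hσ, hp⟩, rfl⟩
    exact (insertMax_mem_StirlingSet_iff σ (by omega)).2 hσ

theorem sum_StirlingSet_succ {M : Type*} [AddCommMonoid M] (n : ℕ)
    (f : (Fin (2*(n+1)) → Fin (n+1+1)) → M) :
    ∑ τ ∈ StirlingSet (n+1), f τ =
      ∑ σ ∈ StirlingSet n, ∑ p ∈ range (2*n+1), f (insertMax σ p) := by
  rw [StirlingSet_succ, sum_image, sum_product]
  rintro ⟨σ, p⟩ hp ⟨τ, q⟩ hq h
  simp only [coe_product, Set.mem_prod, mem_coe, mem_range] at hp hq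
  obtain ⟨rfl, rfl⟩ := insertMax_injOn (by omega) (by omega) h
  rfl

/-- The positions counted by `apQ`. -/
def apSet {n : ℕ} (σ : Fin (2*n) → Fin (n+1)) : Finset ℕ :=
  (Icc 2 (2*n - 1)).filter
    (fun i => sval σ (i-1) < sval σ i ∧ sval σ i = sval σ (i+1))

theorem mem_apSet {n : ℕ} {σ : Fin (2*n) → Fin (n+1)} {i : ℕ} :
    i ∈ apSet σ ↔ (2 ≤ i ∧ i ≤ 2*n - 1) ∧
      sval σ (i-1) < sval σ i ∧ sval σ i = sval σ (i+1) := by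
  rw [apSet, mem_filter, mem_Icc]

theorem add_one_notMem_apSet {n : ℕ} {σ : Fin (2*n) → Fin (n+1)} {i : ℕ}
    (h : i ∈ apSet σ) : i + 1 ∉ apSet σ := by
  intro h'
  rw [mem_apSet] at h h'
  simp only [Nat.add_sub_cancel] at h'
  omega

/-- The gaps whose filling destroys an ascent-plateau. -/
def apGaps {n : ℕ} (σ : Fin (2*n) → Fin (n+1)) : Finset ℕ :=
  apSet σ ∪ (apSet σ).image (· - 1)

theorem mem_apGaps {n : ℕ} {σ : Fin (2*n) → Fin (n+1)} {p : ℕ} :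
    p ∈ apGaps σ ↔ p ∈ apSet σ ∨ p + 1 ∈ apSet σ := by
  simp only [apGaps, mem_union, mem_image]
  refine or_congr_right ⟨?_, fun h => ⟨p + 1, h, rfl⟩⟩
  rintro ⟨i, hi, rfl⟩
  have := (mem_apSet.1 hi).1
  rwa [Nat.sub_add_cancel (by omega)]

theorem card_apGaps {n : ℕ} (σ : Fin (2*n) → Fin (n+1)) :
    (apGaps σ).card = 2 * apQ σ := by
  rw [apGaps, card_union_of_disjoint, card_image_of_injOn, two_mul]
  · rfl
  · intro i hi j hj h
    have := (mem_apSet.1 hi).1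
    have := (mem_apSet.1 hj).1
    simp only at h
    omega
  · rw [disjoint_left]
    intro i hi hi'
    obtain ⟨j, hj, rfl⟩ := mem_image.1 hi'
    have := (mem_apSet.1 hj).1
    apply add_one_notMem_apSet hi
    rwa [Nat.sub_add_cancel (by omega)]

theorem apSet_insertMax {n : ℕ} (σ : Fin (2*n) → Fin (n+1)) {p : ℕ} (hp : p ≤ 2*n) :
    apSet (insertMax σ p) =
      (((apSet σ).erase p).erase (p+1)).image (shiftPos p) ∪
        if p = 0 then ∅ else {p + 1} := by
  ext i
  have hsplit : i ∈ (if p = 0 then (∅ : Finset ℕ) else {p + 1}) ↔ p ≠ 0 ∧ i = p + 1 := by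
    split_ifs with h <;> simp [h]
  rw [mem_union, hsplit]
  simp only [mem_image, mem_erase, mem_apSet, sval_insertMax σ hp]
  constructor
  · rintro ⟨hi, h⟩
    by_cases hip : p ≠ 0 ∧ i = p + 1
    · exact Or.inr hip
    left
    have b₁ := sval_le σ i
    have b₂ := sval_le σ (i - 1)
    have b₃ := sval_le σ (i - 2)
    by_cases hlt : i < p
    · refine ⟨i, ⟨by omega, by omega, by omega, ?_⟩, if_pos hlt.le⟩
      simpa only [show i ≤ p by omega, show i - 1 ≤ p by omega, show i + 1 ≤ p by omega,
        if_true] using h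
    · by_cases hgt : p + 4 ≤ i
      · refine ⟨i - 2, ⟨by omega, by omega, by omega, ?_⟩, ?_⟩
        · simpa only [show ¬ i ≤ p by omega, show ¬ i - 1 ≤ p by omega,
            show ¬ i + 1 ≤ p by omega, show ¬ i ≤ p + 2 by omega,
            show ¬ i - 1 ≤ p + 2 by omega, show ¬ i + 1 ≤ p + 2 by omega, if_false,
            show i - 1 - 2 = i - 2 - 1 by omega, show i + 1 - 2 = i - 2 + 1 by omega] using h
        · rw [shiftPos, if_neg (by omega)]
          omega
      · exfalso
        split_ifs at h <;> omega
  · rintro (⟨j, ⟨h₁, h₂, h₃, h⟩, rfl⟩ | ⟨h₀, rfl⟩)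
    · by_cases hj : j ≤ p
      · simp only [shiftPos, if_pos hj, if_pos (show j - 1 ≤ p by omega),
          if_pos (show j + 1 ≤ p by omega)]
        exact ⟨by omega, h⟩
      · simp only [shiftPos, if_neg hj, show ¬ j + 2 ≤ p by omega,
          show ¬ j + 2 - 1 ≤ p by omega, show ¬ j + 2 + 1 ≤ p by omega,
          show ¬ j + 2 ≤ p + 2 by omega, show ¬ j + 2 - 1 ≤ p + 2 by omega,
          show ¬ j + 2 + 1 ≤ p + 2 by omega, if_false, show j + 2 - 1 - 2 = j - 1 by omega,
          show j + 2 - 2 = j by omega, show j + 2 + 1 - 2 = j + 1 by omega]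
        exact ⟨by omega, h⟩
    · have := sval_le σ p
      refine ⟨by omega, ?_⟩
      simp only [Nat.add_sub_cancel, le_refl, if_true]
      split_ifs <;> omega

theorem apQ_insertMax {n : ℕ} (σ : Fin (2*n) → Fin (n+1)) {p : ℕ} (hp : p ≤ 2*n) :
    apQ (insertMax σ p) + (if p ∈ apGaps σ then 1 else 0) =
      apQ σ + if p = 0 then 0 else 1 := by
  have e : apQ (insertMax σ p) = (apSet (insertMax σ p)).card := rfl
  have e' : apQ σ = (apSet σ).card := rfl
  rw [e, e', apSet_insertMax σ hp, card_union_of_disjoint,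
    card_image_of_injective _ (shiftPos_injective p)]
  · have hc : (if p = 0 then (∅ : Finset ℕ) else {p + 1}).card = if p = 0 then 0 else 1 := by
      split_ifs <;> simp
    rw [hc]
    by_cases h₁ : p ∈ apSet σ
    · have h₂ := add_one_notMem_apSet h₁
      have := card_erase_add_one h₁
      rw [erase_eq_of_notMem (fun h => h₂ (mem_of_mem_erase h)), if_pos (mem_apGaps.2 (Or.inl h₁))]
      omega
    · rw [erase_eq_of_notMem h₁]
      by_cases h₂ : p + 1 ∈ apSet σ
      · have := card_erase_add_one h₂
        rw [if_pos (mem_apGaps.2 (Or.inr h₂))]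
        omega
      · rw [erase_eq_of_notMem h₂, if_neg (fun h => (mem_apGaps.1 h).elim h₁ h₂)]
        omega
  · rw [disjoint_left]
    intro i hi hi'
    obtain ⟨j, -, rfl⟩ := mem_image.1 hi
    split_ifs at hi'
    · simp at hi'
    · rw [mem_singleton, shiftPos] at hi'
      split_ifs at hi' <;> omega

/-- The gaps whose filling preserves `fapQ`. -/
def fapGaps {n : ℕ} (σ : Fin (2*n) → Fin (n+1)) : Finset ℕ :=
  if 1 ≤ n ∧ sval σ 1 = sval σ 2 then insert 0 (apGaps σ) else apGaps σ

/-- The gap whose filling increases `fapQ` by one. -/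
def flagGap {n : ℕ} (σ : Fin (2*n) → Fin (n+1)) : ℕ :=
  if 1 ≤ n ∧ sval σ 1 = sval σ 2 then 1 else 0

theorem zero_notMem_apGaps {n : ℕ} (σ : Fin (2*n) → Fin (n+1)) : 0 ∉ apGaps σ := by
  rw [mem_apGaps, mem_apSet, mem_apSet]
  omega

theorem card_fapGaps {n : ℕ} (σ : Fin (2*n) → Fin (n+1)) : (fapGaps σ).card = fapQ σ := by
  unfold fapGaps fapQ
  split_ifs
  · rw [card_insert_of_notMem (zero_notMem_apGaps σ), card_apGaps]
  · rw [card_apGaps]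

theorem one_notMem_apGaps {n : ℕ} {σ : Fin (2*n) → Fin (n+1)} (h : sval σ 1 = sval σ 2) :
    1 ∉ apGaps σ := by
  rw [mem_apGaps, mem_apSet, mem_apSet]
  simp only [Nat.reduceAdd, Nat.reduceSub]
  omega

theorem flagGap_notMem_fapGaps {n : ℕ} (σ : Fin (2*n) → Fin (n+1)) :
    flagGap σ ∉ fapGaps σ := by
  unfold flagGap fapGaps
  split_ifs with h
  · simpa using one_notMem_apGaps h.2
  · exact zero_notMem_apGaps σ

theorem insert_flagGap_fapGaps_subset {n : ℕ} (σ : Fin (2*n) → Fin (n+1)) :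
    insert (flagGap σ) (fapGaps σ) ⊆ range (2*n+1) := by
  have hsub : apGaps σ ⊆ range (2*n+1) := by
    intro p hp
    rw [mem_apGaps, mem_apSet, mem_apSet] at hp
    rw [mem_range]
    omega
  unfold flagGap fapGaps
  split_ifs with h
  · refine insert_subset (by simp; omega) (insert_subset (by simp) hsub)
  · exact insert_subset (by simp) hsub

theorem fapQ_insertMax {n : ℕ} (σ : Fin (2*n) → Fin (n+1)) {p : ℕ} (hp : p ≤ 2*n) :
    fapQ (insertMax σ p) = fapQ σ +
      if p ∈ fapGaps σ then 0 else if p = flagGap σ then 1 else 2 := by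
  have hap := apQ_insertMax σ hp
  have h₀ := zero_notMem_apGaps σ
  have h₁ := @one_notMem_apGaps n σ
  have b := sval_le σ 1
  have hflag : (1 ≤ n + 1 ∧ sval (insertMax σ p) 1 = sval (insertMax σ p) 2) ↔
      p = 0 ∨ 2 ≤ p ∧ 1 ≤ n ∧ sval σ 1 = sval σ 2 := by
    rw [sval_insertMax σ hp, sval_insertMax σ hp]
    split_ifs <;> omega
  unfold fapQ fapGaps flagGap
  simp only [hflag]
  by_cases hF : 1 ≤ n ∧ sval σ 1 = sval σ 2
  · simp only [hF, and_self, if_true, and_true, mem_insert]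
    have h₁ := h₁ hF.2
    rcases p with _ | _ | p
    · simp [h₀] at hap ⊢; omega
    · simp [h₁] at hap ⊢; omega
    · by_cases hB : p + 1 + 1 ∈ apGaps σ <;> simp [hB] at hap ⊢ <;> omega
  · simp only [hF, if_false, and_false, or_false]
    rcases p with _ | p
    · simp [h₀] at hap ⊢; omega
    · by_cases hB : p + 1 ∈ apGaps σ <;> simp [hB] at hap ⊢ <;> omega

theorem sum_range_fapQ_insertMax {n : ℕ} (σ : Fin (2*n) → Fin (n+1)) (k : ℤ) :
    ∑ p ∈ range (2*n+1), (if (fapQ (insertMax σ p) : ℤ) = k then (1 : ℤ) else 0) =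
      k * (if (fapQ σ : ℤ) = k then 1 else 0) + (if (fapQ σ : ℤ) = k - 1 then 1 else 0) +
        (2 * (n : ℤ) - k + 2) * (if (fapQ σ : ℤ) = k - 2 then 1 else 0) := by
  have hsub := insert_flagGap_fapGaps_subset σ
  have hnot := flagGap_notMem_fapGaps σ
  have hcard := card_insert_of_notMem hnot
  have hsdiff := card_sdiff_add_card_eq_card hsub
  rw [hcard, card_fapGaps, card_range] at hsdiff
  have hval (p : ℕ) (hp : p ∈ range (2*n+1)) := fapQ_insertMax σ (p := p)
    (by rw [mem_range] at hp; omega)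
  rw [← sum_sdiff hsub, sum_insert hnot,
    sum_congr (g := fun _ => if (fapQ σ : ℤ) = k - 2 then (1 : ℤ) else 0) rfl,
    sum_congr (s₁ := fapGaps σ) (g := fun _ => if (fapQ σ : ℤ) = k then (1 : ℤ) else 0) rfl,
    hval _ (hsub (mem_insert_self _ _)), if_neg hnot, if_pos rfl]
  · simp only [sum_const, card_fapGaps, nsmul_eq_mul]
    push_cast
    split_ifs <;> omega
  · intro p hp
    rw [hval p (hsub (mem_insert_of_mem hp)), if_pos hp, Nat.add_zero]
  · intro p hp
    simp only [mem_sdiff, mem_insert, not_or] at hp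
    rw [hval p hp.1, if_neg hp.2.2, if_neg hp.2.1]
    exact if_congr (by push_cast; omega) rfl rfl

theorem Tnum_eq_sum (n : ℕ) (k : ℤ) :
    Tnum n k = ∑ σ ∈ StirlingSet n, if (fapQ σ : ℤ) = k then (1 : ℤ) else 0 := by
  unfold Tnum
  split_ifs with hk
  · rw [card_filter]
    push_cast
    rfl
  · exact (sum_eq_zero fun σ _ => if_neg (by omega)).symm

theorem Tnum_succ (n : ℕ) (k : ℤ) :
    Tnum (n + 1) k =
      k * Tnum n k + Tnum n (k - 1) + (2 * (n : ℤ) - k + 2) * Tnum n (k - 2) := by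
  simp only [Tnum_eq_sum, sum_StirlingSet_succ, sum_range_fapQ_insertMax, sum_add_distrib,
    mul_sum]

theorem Tnum_zero (k : ℤ) : Tnum 0 k = if k = 0 then 1 else 0 := by
  have hset : StirlingSet 0 = univ := by
    refine filter_true_of_mem fun σ _ => ⟨fun v hv => absurd v.isLt (by omega), ?_⟩
    exact fun i => i.elim0
  have hfap (σ : Fin (2*0) → Fin (0+1)) : fapQ σ = 0 := by simp [fapQ, apQ]
  rw [Tnum_eq_sum, hset]
  simp [hfap, eq_comm]

theorem statement_7 :
    (∀ (n : ℕ) (k : ℤ), 0 ≤ k →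
        Tnum (n + 1) k =
          k * Tnum n k + Tnum n (k - 1) + (2 * (n : ℤ) - k + 2) * Tnum n (k - 2)) ∧
    Tnum 0 0 = 1 ∧ Tnum 1 1 = 1 ∧ ∀ k : ℤ, k ≠ 1 → Tnum 1 k = 0 := by
  refine ⟨fun n k _ => Tnum_succ n k, by simp [Tnum_zero], ?_, fun k hk => ?_⟩
  · rw [show (1 : ℕ) = 0 + 1 from rfl, Tnum_succ]
    simp [Tnum_zero]
  · rw [show (1 : ℕ) = 0 + 1 from rfl, Tnum_succ]
    simp only [Tnum_zero]
    split_ifs <;> push_cast <;> omega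
end

section
/- For every n ≥ 1 and all i, j, k ≥ 0, the number of Stirling permutations σ ∈ Q_n with lap(σ) = i, dasc(σ) = j, dp(σ) = k equals the number of σ ∈ Q_n with lap(σ) = i, dasc(σ) = k, dp(σ) = j. Equivalently, the polynomial P_n(x,y,z) = Σ_{σ ∈ Q_n} x^{lap(σ)} y^{dasc(σ)} z^{dp(σ)} satisfies P_n(x,y,z) = P_n(x,z,y). -/
open Finset MvPolynomial

/-- Ternary trees with labelled nodes. -/
inductive TernaryTree : Type
  | nil : TernaryTree
  | node (v : ℕ) (l m r : TernaryTree) : TernaryTree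

namespace TernaryTree

instance : Nonempty TernaryTree := ⟨nil⟩

/-- The word of a tree: each node label surrounds the word of its middle subtree. -/
def word : TernaryTree → List ℕ
  | nil => []
  | node v l m r => l.word ++ v :: (m.word ++ v :: r.word)

/-- Exchange the left and the middle subtree at every node. -/
def swap : TernaryTree → TernaryTree
  | nil => nil
  | node v l m r => node v m.swap l.swap r.swap

/-- Labels strictly increase away from the root. -/
def Increasing : TernaryTree → Prop
  | nil => True
  | node v l m r => (∀ x ∈ l.word, v < x) ∧ (∀ x ∈ m.word, v < x) ∧ (∀ x ∈ r.word, v < x) ∧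
      l.Increasing ∧ m.Increasing ∧ r.Increasing

/-- The number of nodes whose first occurrence in the word has left and right comparisons
satisfying `c`. -/
def stat (c : Ordering → Ordering → Bool) : TernaryTree → ℕ
  | nil => 0
  | node _ l m r =>
    (if c (if l.word = [] then .lt else .gt) (if m.word = [] then .eq else .lt) then 1 else 0) +
      l.stat c + m.stat c + r.stat c

theorem swap_swap (t : TernaryTree) : t.swap.swap = t := by
  induction t with
  | nil => rfl
  | node v l m r hl hm hr => simp [swap, *]

theorem word_swap_perm (t : TernaryTree) : t.swap.word.Perm t.word := by
  induction t with
  | nil => exact .refl _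
  | node v l m r hl hm hr =>
    rw [List.perm_iff_count] at *
    intro a
    simp [swap, word, List.count_append, List.count_cons, *]
    omega

theorem mem_word_swap {t : TernaryTree} {x : ℕ} : x ∈ t.swap.word ↔ x ∈ t.word :=
  t.word_swap_perm.mem_iff

theorem word_swap_eq_nil {t : TernaryTree} : t.swap.word = [] ↔ t.word = [] := by
  simp [List.eq_nil_iff_forall_not_mem, mem_word_swap]

theorem Increasing.swap {t : TernaryTree} (h : t.Increasing) : t.swap.Increasing := by
  induction t with
  | nil => exact h
  | node v l m r hl hm hr =>
    obtain ⟨h1, h2, h3, h4, h5, h6⟩ := h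
    simp only [TernaryTree.swap, Increasing, mem_word_swap]
    exact ⟨h2, h1, h3, hm h5, hl h4, hr h6⟩

theorem stat_swap {c d : Ordering → Ordering → Bool} (h₁ : c .lt .eq = d .lt .eq)
    (h₂ : c .lt .lt = d .gt .eq) (h₃ : c .gt .eq = d .lt .lt) (h₄ : c .gt .lt = d .gt .lt)
    (t : TernaryTree) : t.swap.stat c = t.stat d := by
  induction t with
  | nil => rfl
  | node v l m r hl hm hr =>
    simp only [TernaryTree.swap, stat, word_swap_eq_nil, hl, hm, hr]
    by_cases a : l.word = [] <;> by_cases b : m.word = [] <;> simp [*] <;> omega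

theorem two_le_count_word {t : TernaryTree} {x : ℕ} (h : x ∈ t.word) : 2 ≤ t.word.count x := by
  induction t with
  | nil => simp [word] at h
  | node v l m r hl hm hr =>
    simp only [word, List.count_append, List.count_cons, List.mem_append, List.mem_cons] at *
    by_cases hx : v = x
    · simp [hx]; omega
    · have hx' : ¬ x = v := fun e => hx e.symm
      simp only [hx', false_or] at h
      rcases h with h | h | h
      · have := hl h; omega
      · have := hm h; omega
      · have := hr h; omega

theorem le_of_mem_word {v x : ℕ} {l m r : TernaryTree} (h : (node v l m r).Increasing)
    (hx : x ∈ (node v l m r).word) : v ≤ x := by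
  obtain ⟨h1, h2, h3, -⟩ := h
  simp only [word, List.mem_append, List.mem_cons] at hx
  grind

theorem word_injOn {s t : TernaryTree} (hs : s.Increasing) (ht : t.Increasing)
    (h : s.word = t.word) : s = t := by
  induction s generalizing t with
  | nil =>
    cases t with
    | nil => rfl
    | node v l m r => simp [word] at h
  | node v l m r hl hm hr =>
    cases t with
    | nil => simp [word] at h
    | node v' l' m' r' =>
      have e : v = v' := le_antisymm
        (le_of_mem_word hs (by rw [h]; simp [word]))
        (le_of_mem_word ht (by rw [← h]; simp [word]))
      subst e
      obtain ⟨a1, a2, a3, a4, a5, a6⟩ := hs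
      obtain ⟨b1, b2, b3, b4, b5, b6⟩ := ht
      have split : ∀ {x₁ x₂ y₁ y₂ : List ℕ}, (∀ x ∈ x₁, v < x) → (∀ x ∈ x₂, v < x) →
          x₁ ++ v :: y₁ = x₂ ++ v :: y₂ → x₁ = x₂ ∧ y₁ = y₂ := by
        intro x₁ x₂ y₁ y₂ g1 g2 g
        have n1 : v ∉ x₁ := fun hv => (g1 _ hv).false
        have n2 : v ∉ x₂ := fun hv => (g2 _ hv).false
        rw [List.append_eq_append_iff] at g
        rcases g with ⟨u, rfl, g⟩ | ⟨u, rfl, g⟩ <;> cases u <;> simp_all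
      obtain ⟨e1, e'⟩ := split a1 b1 h
      obtain ⟨e2, e3⟩ := split a2 b2 e'
      rw [hl a4 b4 e1, hm a5 b5 e2, hr a6 b6 e3]

end TernaryTree

/-- The number of interior positions of a list whose comparisons with the left and with the
right neighbour satisfy `c`. -/
def neighbourCount (c : Ordering → Ordering → Bool) : List ℕ → ℕ
  | a :: b :: d :: t =>
    (if c (compare a b) (compare b d) then 1 else 0) + neighbourCount c (b :: d :: t)
  | _ => 0

namespace TernaryTree

theorem neighbourCount_word {c : Ordering → Ordering → Bool} (hgt : ∀ o, c o .gt = false)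
    (heq : c .eq .lt = false) (hgl : c .gt .lt = false) {t : TernaryTree} (ht : t.Increasing)
    {q : ℕ} (hq : ∀ x ∈ t.word, q < x) {s : List ℕ} (hs : ∀ b ∈ s.head?, ∀ x ∈ t.word, b < x) :
    neighbourCount c (q :: (t.word ++ s)) =
      t.stat c + neighbourCount c (t.word.getLastD q :: s) := by
  induction t generalizing q s with
  | nil => simp [word, stat]
  | node v l m r hl hm hr =>
    obtain ⟨a1, a2, a3, a4, a5, a6⟩ := ht
    simp only [word, List.mem_append, List.mem_cons] at hq hs
    have hqv : q < v := hq v (by simp)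
    have first : neighbourCount c (l.word.getLastD q :: v :: (m.word ++ v :: (r.word ++ s))) =
        (if c (if l.word = [] then .lt else .gt) (if m.word = [] then .eq else .lt)
          then 1 else 0) + neighbourCount c (v :: (m.word ++ v :: (r.word ++ s))) := by
      have hleft : compare (l.word.getLastD q) v = if l.word = [] then .lt else .gt := by
        split_ifs with h
        · simpa [h, compare_lt_iff_lt] using hqv
        · rw [compare_gt_iff_gt, List.getLastD_eq_getLast?, List.getLast?_eq_some_getLast h]
          exact a1 _ (List.getLast_mem h)
      rw [← hleft]
      cases hmw : m.word with
      | nil => simp [neighbourCount]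
      | cons x y =>
        have : v < x := a2 x (by simp [hmw])
        simp [neighbourCount, compare_lt_iff_lt.2 this]
    have second : neighbourCount c (m.word.getLastD v :: v :: (r.word ++ s)) =
        neighbourCount c (v :: (r.word ++ s)) := by
      have hleft : compare (m.word.getLastD v) v ≠ .lt := by
        rw [Ne, compare_lt_iff_lt, not_lt]
        by_cases h : m.word = []
        · simp [h]
        · rw [List.getLastD_eq_getLast?, List.getLast?_eq_some_getLast h]
          exact (a2 _ (List.getLast_mem h)).le
      have hzero : c (compare (m.word.getLastD v) v) .lt = false := by
        cases h : compare (m.word.getLastD v) v <;> simp_all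
      cases hrw : r.word with
      | nil =>
        cases s with
        | nil => simp [neighbourCount]
        | cons x y =>
          have : x < v := hs x (by simp) v (by simp)
          simp [neighbourCount, compare_gt_iff_gt.2 this, hgt]
      | cons x y =>
        have : v < x := a3 x (by simp [hrw])
        simp only [List.cons_append, neighbourCount, compare_lt_iff_lt.2 this, hzero]
        simp
    have elast : (node v l m r).word.getLastD q = r.word.getLastD v := by
      simp [word, List.getLastD_eq_getLast?, List.getLast?_append, List.getLast?_cons]
    rw [elast, word, stat, List.append_assoc, List.cons_append, List.append_assoc,
      List.cons_append, hl a4 (fun x hx => hq x (by simp [hx])) (by simpa using a1), first,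
      hm a5 a2 (by simpa using a2), second,
      hr a6 a3 (fun b hb x hx => hs b hb x (by simp [hx]))]
    omega

theorem neighbourCount_zero_cons_word {c : Ordering → Ordering → Bool}
    (hgt : ∀ o, c o .gt = false) (heq : c .eq .lt = false) (hgl : c .gt .lt = false)
    {t : TernaryTree} (ht : t.Increasing) (h0 : 0 ∉ t.word) :
    neighbourCount c (0 :: t.word) = t.stat c := by
  have h := neighbourCount_word hgt heq hgl ht (q := 0) (s := [])
    (fun x hx => Nat.pos_of_ne_zero fun e => h0 (e ▸ hx)) (by simp)
  simpa [neighbourCount] using h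

end TernaryTree

/-- Whatever lies between two equal entries is larger. -/
def IsStirlingWord (w : List ℕ) : Prop :=
  ∀ a b, [a, b, a].Sublist w → a < b

theorem TernaryTree.Increasing.isStirlingWord {t : TernaryTree} (ht : t.Increasing)
    (hc : ∀ x, t.word.count x ≤ 2) : IsStirlingWord t.word := by
  induction t with
  | nil => intro a b h; simp [word] at h
  | node v l m r hl hm hr =>
    intro a b h
    have drop_right : ∀ {X Y : List ℕ}, a ∉ Y → [a, b, a].Sublist (X ++ Y) →
        [a, b, a].Sublist X := by
      intro X Y hY h
      obtain ⟨u, w, e, hu, hw⟩ := List.sublist_append_iff.1 h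
      rcases List.eq_nil_or_concat w with rfl | ⟨w', z, rfl⟩
      · simpa [e] using hu
      · have : z = a := by
          have := congrArg List.getLast? e
          simpa [List.getLast?_append] using this.symm
        exact absurd (hw.subset (by simp [this])) hY
    have drop_left : ∀ {X Y : List ℕ}, a ∉ X → [a, b, a].Sublist (X ++ Y) →
        [a, b, a].Sublist Y := by
      intro X Y hX h
      obtain ⟨u, w, e, hu, hw⟩ := List.sublist_append_iff.1 h
      cases u with
      | nil => simpa [e] using hw
      | cons z u' =>
        simp only [List.cons_append, List.cons.injEq] at e
        exact absurd (hu.subset (by simp [e.1])) hX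
    have hmin : ∀ x ∈ (node v l m r).word, v ≤ x := fun x hx => le_of_mem_word ht hx
    obtain ⟨a1, a2, a3, a4, a5, a6⟩ := ht
    have hb := hmin b (h.subset (by simp))
    have ha := hmin a (h.subset (by simp))
    have hcount := fun x => hc x
    simp only [word, List.count_append, List.count_cons] at hcount
    have cl : ∀ x, l.word.count x ≤ 2 := fun x => by have := hcount x; omega
    have cm : ∀ x, m.word.count x ≤ 2 := fun x => by have := hcount x; omega
    have cr : ∀ x, r.word.count x ≤ 2 := fun x => by have := hcount x; omega
    by_cases hav : a = v
    · subst hav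
      refine lt_of_le_of_ne hb ?_
      rintro rfl
      have := h.count_le a
      have := hc a
      simp at *
      omega
    · have e1 : a ∈ l.word → a ∉ m.word ∧ a ∉ r.word := fun h1 => by
        have := two_le_count_word h1
        have := hcount a
        exact ⟨fun h2 => by have := two_le_count_word h2; omega,
          fun h2 => by have := two_le_count_word h2; omega⟩
      have e2 : a ∈ m.word → a ∉ r.word := fun h1 h2 => by
        have := two_le_count_word h1
        have := two_le_count_word h2
        have := hcount a
        omega
      rw [word] at h
      by_cases hal : a ∈ l.word
      · exact hl a4 cl a b (drop_right (by simp [hav, e1 hal]) h)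
      · have h := drop_left (X := l.word ++ [v]) (Y := m.word ++ v :: r.word)
          (by simp [hal, hav]) (by simpa using h)
        by_cases ham : a ∈ m.word
        · exact hm a5 cm a b (drop_right (by simp [hav, e2 ham]) h)
        · exact hr a6 cr a b (drop_left (X := m.word ++ [v]) (by simp [ham, hav])
            (by simpa using h))

theorem IsStirlingWord.exists_tree {w : List ℕ} (hw : IsStirlingWord w)
    (hc : ∀ x ∈ w, w.count x = 2) : ∃ t : TernaryTree, t.Increasing ∧ t.word = w := by
  induction hn : w.length using Nat.strong_induction_on generalizing w with
  | _ n ih =>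
    subst hn
    by_cases hnil : w = []
    · exact ⟨.nil, trivial, by simp [TernaryTree.word, hnil]⟩
    obtain ⟨v, hv, hmin⟩ : ∃ v ∈ w, ∀ x ∈ w, v ≤ x := by
      obtain ⟨v, hv, h⟩ := w.toFinset.exists_min_image id (by simpa using hnil)
      exact ⟨v, by simpa using hv, fun x hx => h x (by simpa using hx)⟩
    obtain ⟨p, w', rfl, hp⟩ := List.eq_append_cons_of_mem hv
    have hcv := hc v hv
    have hv' : v ∈ w' := by
      rw [← List.count_pos_iff]
      simp [List.count_append, List.count_eq_zero_of_not_mem hp] at hcv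
      omega
    obtain ⟨q, r, rfl, hq⟩ := List.eq_append_cons_of_mem hv'
    have hr : v ∉ r := by
      rw [← List.count_eq_zero]
      simp [List.count_append, List.count_eq_zero_of_not_mem hp,
        List.count_eq_zero_of_not_mem hq] at hcv
      omega
    have sep : ∀ x, x ≠ v → ¬ [x, v, x].Sublist (p ++ v :: (q ++ v :: r)) := fun x hx h =>
      absurd (hw x v h) (not_lt.2 (hmin x (h.subset (by simp))))
    have single : ∀ {x : ℕ} {y : List ℕ}, x ∈ y → [x].Sublist y := List.singleton_sublist.2
    have pq : ∀ x ∈ p, x ∉ q := fun x h1 h2 => sep x (by rintro rfl; exact hp h1) <|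
      (single h1).append (List.Sublist.cons_cons v ((single h2).trans (List.sublist_append_left _ _)))
    have pr : ∀ x ∈ p, x ∉ r := fun x h1 h2 => sep x (by rintro rfl; exact hp h1) <|
      (single h1).append (List.Sublist.cons_cons v ((single h2).trans
        ((List.sublist_cons_self _ _).trans (List.sublist_append_right _ _))))
    have qr : ∀ x ∈ q, x ∉ r := fun x h1 h2 => sep x (by rintro rfl; exact hq h1) <|
      (((single h1).append (List.Sublist.cons_cons v (single h2))).trans
        (List.sublist_cons_self _ _)).trans (List.sublist_append_right _ _)
    have count_eq : ∀ x, x ≠ v → p.count x + (q.count x + r.count x) =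
        (p ++ v :: (q ++ v :: r)).count x := fun x hx => by
      simp [List.count_append, hx.symm]
    have lp : p.Sublist (p ++ v :: (q ++ v :: r)) := List.sublist_append_left _ _
    have lq : q.Sublist (p ++ v :: (q ++ v :: r)) :=
      ((List.sublist_append_left _ _).trans (List.sublist_cons_self _ _)).trans
        (List.sublist_append_right _ _)
    have lr : r.Sublist (p ++ v :: (q ++ v :: r)) :=
      (((List.sublist_cons_self _ _).trans (List.sublist_append_right _ _)).trans
        (List.sublist_cons_self _ _)).trans (List.sublist_append_right _ _)
    obtain ⟨tp, ip, rfl⟩ := ih p.length (by simp) (fun a b h => hw a b (h.trans lp))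
      (fun x hx => by
        have := count_eq x (by rintro rfl; exact hp hx)
        have := hc x (lp.subset hx)
        have := List.count_eq_zero_of_not_mem (pq x hx)
        have := List.count_eq_zero_of_not_mem (pr x hx)
        omega) rfl
    obtain ⟨tq, iq, rfl⟩ := ih q.length (by simp; omega) (fun a b h => hw a b (h.trans lq))
      (fun x hx => by
        have := count_eq x (by rintro rfl; exact hq hx)
        have := hc x (lq.subset hx)
        have := List.count_eq_zero_of_not_mem (fun h => pq x h hx)
        have := List.count_eq_zero_of_not_mem (qr x hx)
        omega) rfl
    obtain ⟨tr, ir, rfl⟩ := ih r.length (by simp; omega) (fun a b h => hw a b (h.trans lr))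
      (fun x hx => by
        have := count_eq x (by rintro rfl; exact hr hx)
        have := hc x (lr.subset hx)
        have := List.count_eq_zero_of_not_mem (fun h => pr x h hx)
        have := List.count_eq_zero_of_not_mem (fun h => qr x h hx)
        omega) rfl
    refine ⟨.node v tp tq tr, ⟨fun x hx => ?_, fun x hx => ?_, fun x hx => ?_, ip, iq, ir⟩, rfl⟩
    · exact lt_of_le_of_ne (hmin x (lp.subset hx)) (by rintro rfl; exact hp hx)
    · exact lt_of_le_of_ne (hmin x (lq.subset hx)) (by rintro rfl; exact hq hx)
    · exact lt_of_le_of_ne (hmin x (lr.subset hx)) (by rintro rfl; exact hr hx)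

theorem neighbourCount_eq_card (c : Ordering → Ordering → Bool) (w : List ℕ) :
    neighbourCount c w = ((Finset.range (w.length - 2)).filter fun i =>
      c (compare (w.getD i 0) (w.getD (i + 1) 0))
        (compare (w.getD (i + 1) 0) (w.getD (i + 2) 0))).card := by
  induction w with
  | nil => simp [neighbourCount]
  | cons a w ih =>
    match w, ih with
    | [], _ => simp [neighbourCount]
    | [b], _ => simp [neighbourCount]
    | b :: d :: t, ih =>
      rw [neighbourCount, ih, Finset.card_filter, Finset.card_filter]
      have : (a :: b :: d :: t).length - 2 = (b :: d :: t).length - 2 + 1 := by simp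
      rw [this, Finset.sum_range_succ']
      simp only [List.getD_cons_succ, List.getD_cons_zero]
      exact add_comm _ _

/-- The one-line notation of a word on `Fin (2 * n)`, as a list of natural numbers. -/
def toWord {n : ℕ} (σ : Fin (2 * n) → Fin (n + 1)) : List ℕ :=
  List.ofFn fun i => (σ i : ℕ)

section toWord

variable {n : ℕ} (σ : Fin (2 * n) → Fin (n + 1))

theorem length_toWord : (toWord σ).length = 2 * n := by simp [toWord]

theorem get_toWord (i : Fin (toWord σ).length) :
    (toWord σ).get i = σ (Fin.cast (length_toWord σ) i) :=
  List.get_ofFn (fun i => (σ i : ℕ)) i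

theorem toWord_injective : Function.Injective (toWord (n := n)) := fun σ τ h => by
  have := List.ofFn_injective h
  exact funext fun i => Fin.ext (congrFun this i)

theorem exists_toWord_eq {w : List ℕ} (hw : w.length = 2 * n) (hle : ∀ x ∈ w, x ≤ n) :
    ∃ σ : Fin (2 * n) → Fin (n + 1), toWord σ = w := by
  refine ⟨fun i => ⟨w[i], Nat.lt_succ_of_le (hle _ (List.getElem_mem _))⟩, ?_⟩
  apply List.ext_getElem <;> simp [toWord, hw]

theorem sval_eq_getD (i : ℕ) : sval σ i = (0 :: toWord σ).getD i 0 := by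
  cases i with
  | zero => simp [sval]
  | succ i =>
    by_cases h : i < 2 * n
    · have : i + 1 ≤ 2 * n := h
      simp [sval, toWord, this]
    · have : ¬ i + 1 ≤ 2 * n := h
      simp [sval, toWord, this]

theorem card_filter_sval (c : Ordering → Ordering → Bool) :
    ((Finset.Icc 1 (2 * n - 1)).filter fun i =>
      c (compare (sval σ (i - 1)) (sval σ i)) (compare (sval σ i) (sval σ (i + 1)))).card =
      neighbourCount c (0 :: toWord σ) := by
  rw [neighbourCount_eq_card]
  refine Finset.card_bij' (fun i _ => i - 1) (fun i _ => i + 1) ?_ ?_ ?_ ?_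
  · intro i hi
    simp only [Finset.mem_filter, Finset.mem_Icc] at hi
    obtain ⟨⟨h1, h2⟩, h3⟩ := hi
    obtain ⟨i, rfl⟩ : ∃ k, i = k + 1 := ⟨i - 1, by omega⟩
    simp only [sval_eq_getD, Nat.add_sub_cancel] at h3
    simp only [Finset.mem_filter, Finset.mem_range, Nat.add_sub_cancel, List.length_cons,
      length_toWord]
    exact ⟨by omega, h3⟩
  · intro i hi
    simp only [Finset.mem_filter, Finset.mem_range, List.length_cons, length_toWord] at hi
    simp only [Finset.mem_filter, Finset.mem_Icc, sval_eq_getD, Nat.add_sub_cancel]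
    exact ⟨by omega, hi.2⟩
  · intro i hi
    simp only [Finset.mem_filter, Finset.mem_Icc] at hi
    omega
  · intro i _
    simp

theorem lapQ_eq : lapQ σ = neighbourCount (fun a b => a == .lt && b == .eq) (0 :: toWord σ) := by
  rw [← card_filter_sval, lapQ]
  congr 1
  ext i
  simp [compare_lt_iff_lt]

theorem dascQ_eq :
    dascQ σ = neighbourCount (fun a b => a == .lt && b == .lt) (0 :: toWord σ) := by
  rw [← card_filter_sval, dascQ]
  congr 1
  ext i
  simp [compare_lt_iff_lt]

theorem dpQ_eq : dpQ σ = neighbourCount (fun a b => a == .gt && b == .eq) (0 :: toWord σ) := by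
  rw [← card_filter_sval, dpQ]
  congr 1
  ext i
  simp only [Finset.mem_filter, Finset.mem_Icc, Bool.and_eq_true, beq_iff_eq, compare_gt_iff_gt,
    compare_eq_iff_eq]
  refine ⟨fun ⟨h1, h2⟩ => ⟨by omega, h2⟩, fun ⟨h1, h2⟩ => ⟨⟨?_, h1.2⟩, h2⟩⟩
  by_contra hlt
  obtain rfl : i = 1 := by omega
  have : sval σ 0 = 0 := by simp [sval]
  have := h2.1
  simp_all

theorem count_toWord (v : Fin (n + 1)) :
    (toWord σ).count (v : ℕ) = (Finset.univ.filter fun i => σ i = v).card := by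
  have h : ((fun x : ℕ => x == (v : ℕ)) ∘ fun i => (σ i : ℕ)) = fun i => decide (σ i = v) := by
    ext i
    rw [Bool.eq_iff_iff]
    simp [Fin.ext_iff]
  rw [toWord, List.ofFn_eq_map, List.count, List.countP_map, h, ← Multiset.coe_countP,
    Multiset.countP_eq_card_filter]
  rfl

theorem isStirlingWord_toWord_iff : IsStirlingWord (toWord σ) ↔
    ∀ i j k : Fin (2 * n), i < j → j < k → σ i = σ k → σ i < σ j := by
  constructor
  · intro h i j k hij hjk hik
    refine h (σ i) (σ j) (List.sublist_iff_exists_fin_orderEmbedding_get_eq.2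
      ⟨OrderEmbedding.ofStrictMono
        (fun x : Fin 3 => Fin.cast (length_toWord σ).symm (![i, j, k] x)) ?_, ?_⟩)
    · intro x y hxy
      fin_cases x <;> fin_cases y <;> simp at hxy ⊢ <;> first | assumption | exact hij.trans hjk
    · intro x
      rw [get_toWord]
      fin_cases x
      · rfl
      · rfl
      · exact congrArg Fin.val hik
  · intro h a b hs
    obtain ⟨f, hf⟩ := List.sublist_iff_exists_fin_orderEmbedding_get_eq.1 hs
    have h0 := hf 0
    have h1 := hf 1
    have h2 := hf 2
    have l01 : f 0 < f 1 := f.strictMono (by simp)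
    have l12 : f 1 < f 2 := f.strictMono (Fin.lt_def.2 Nat.one_lt_two)
    have key := h (Fin.cast (length_toWord σ) (f 0)) (Fin.cast (length_toWord σ) (f 1))
      (Fin.cast (length_toWord σ) (f 2)) l01 l12
    have e : a = σ (Fin.cast (length_toWord σ) (f 0)) := h0.trans (get_toWord σ _)
    have e1 : b = σ (Fin.cast (length_toWord σ) (f 1)) := h1.trans (get_toWord σ _)
    have e2 : a = σ (Fin.cast (length_toWord σ) (f 2)) := h2.trans (get_toWord σ _)
    rw [e, e1]
    exact key (Fin.ext (e ▸ e2))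

theorem mem_StirlingSet_iff : σ ∈ StirlingSet n ↔
    (∀ v, v ≠ 0 → v ≤ n → (toWord σ).count v = 2) ∧ IsStirlingWord (toWord σ) := by
  rw [isStirlingWord_toWord_iff]
  simp only [StirlingSet, Finset.mem_filter, Finset.mem_univ, true_and]
  refine and_congr_left fun _ => ⟨fun h v h0 hv => ?_, fun h v h0 => ?_⟩
  · rw [← h ⟨v, Nat.lt_succ_of_le hv⟩ h0, ← count_toWord]
  · rw [← count_toWord, h v h0 v.is_le]

variable {σ}

theorem zero_notMem_toWord (h : σ ∈ StirlingSet n) : 0 ∉ toWord σ := by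
  have h := (mem_StirlingSet_iff σ).1 h
  have hsum := Finset.card_eq_sum_card_fiberwise (f := σ) (s := Finset.univ)
    (t := Finset.univ) (by simp)
  simp only [← count_toWord, Fin.sum_univ_succ, Fin.val_zero] at hsum
  rw [Finset.sum_congr rfl fun (v : Fin n) _ =>
    h.1 v.succ (by simp) (by simp)] at hsum
  rw [← List.count_eq_zero]
  simp at hsum
  omega

theorem le_of_mem_toWord {x : ℕ} (h : x ∈ toWord σ) : x ≤ n := by
  obtain ⟨i, rfl⟩ := List.mem_ofFn.1 h
  exact (σ i).is_le

theorem exists_tree_of_mem_StirlingSet (h : σ ∈ StirlingSet n) :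
    ∃ t : TernaryTree, t.Increasing ∧ t.word = toWord σ := by
  have h' := (mem_StirlingSet_iff σ).1 h
  refine h'.2.exists_tree fun x hx => h'.1 x ?_ (le_of_mem_toWord hx)
  rintro rfl
  exact zero_notMem_toWord h hx

theorem exists_swap_of_mem_StirlingSet (h : σ ∈ StirlingSet n) :
    ∃ τ ∈ StirlingSet n, ∃ t : TernaryTree, t.Increasing ∧ t.word = toWord σ ∧
      t.swap.word = toWord τ := by
  obtain ⟨t, ht, e⟩ := exists_tree_of_mem_StirlingSet h
  have hp := e ▸ t.word_swap_perm
  obtain ⟨τ, hτ⟩ := exists_toWord_eq (n := n) (w := t.swap.word)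
    (by rw [hp.length_eq, length_toWord]) fun x hx => le_of_mem_toWord (hp.mem_iff.1 hx)
  have hc : ∀ v, v ≠ 0 → v ≤ n → t.swap.word.count v = 2 := fun v h0 hv => by
    rw [hp.count_eq, ((mem_StirlingSet_iff σ).1 h).1 v h0 hv]
  refine ⟨τ, (mem_StirlingSet_iff τ).2 ⟨hτ ▸ hc, ?_⟩, t, ht, e, hτ.symm⟩
  rw [hτ]
  refine ht.swap.isStirlingWord fun x => ?_
  by_cases hx : x ∈ t.swap.word
  · refine (hc x ?_ (le_of_mem_toWord (hp.mem_iff.1 hx))).le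
    rintro rfl
    exact zero_notMem_toWord h (hp.mem_iff.1 hx)
  · simp [List.count_eq_zero_of_not_mem hx]

theorem stats_swap {τ : Fin (2 * n) → Fin (n + 1)} (hσ : σ ∈ StirlingSet n)
    (hτ : τ ∈ StirlingSet n) {t : TernaryTree} (ht : t.Increasing) (e : t.word = toWord σ)
    (e' : t.swap.word = toWord τ) :
    lapQ τ = lapQ σ ∧ dascQ τ = dpQ σ ∧ dpQ τ = dascQ σ := by
  have h0 := e ▸ zero_notMem_toWord hσ
  have h0' := e' ▸ zero_notMem_toWord hτ
  simp only [lapQ_eq, dascQ_eq, dpQ_eq, ← e, ← e']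
  refine ⟨?_, ?_, ?_⟩ <;>
  · rw [TernaryTree.neighbourCount_zero_cons_word (by simp) rfl rfl ht h0,
      TernaryTree.neighbourCount_zero_cons_word (by simp) rfl rfl ht.swap h0']
    apply TernaryTree.stat_swap <;> rfl

end toWord

theorem card_filter_StirlingSet_le (n i j k : ℕ) :
    ((StirlingSet n).filter (fun σ => lapQ σ = i ∧ dascQ σ = j ∧ dpQ σ = k)).card ≤
      ((StirlingSet n).filter (fun σ => lapQ σ = i ∧ dascQ σ = k ∧ dpQ σ = j)).card := by
  choose! φ hφ t ht e e' using fun σ => exists_swap_of_mem_StirlingSet (n := n) (σ := σ)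
  refine Finset.card_le_card_of_injOn φ ?_ ?_
  · intro σ hσ
    simp only [Finset.coe_filter, Set.mem_ofPred_eq] at hσ ⊢
    obtain ⟨h, h1, h2, h3⟩ := hσ
    obtain ⟨s1, s2, s3⟩ := stats_swap h (hφ σ h) (ht σ h) (e σ h) (e' σ h)
    exact ⟨hφ σ h, s1.trans h1, s2.trans h3, s3.trans h2⟩
  · intro σ hσ τ hτ h
    have hσ := (Finset.mem_filter.1 hσ).1
    have hτ := (Finset.mem_filter.1 hτ).1
    have hw : (t σ).swap.word = (t τ).swap.word := by rw [e' σ hσ, e' τ hτ, h]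
    have hs := TernaryTree.word_injOn (TernaryTree.Increasing.swap (ht σ hσ)) (TernaryTree.Increasing.swap (ht τ hτ)) hw
    have := congrArg TernaryTree.swap hs
    rw [TernaryTree.swap_swap, TernaryTree.swap_swap] at this
    exact toWord_injective (by rw [← e σ hσ, ← e τ hτ, this])

theorem statement_13 (n : ℕ) (hn : 1 ≤ n) (i j k : ℕ) :
    ((StirlingSet n).filter (fun σ => lapQ σ = i ∧ dascQ σ = j ∧ dpQ σ = k)).card =
      ((StirlingSet n).filter (fun σ => lapQ σ = i ∧ dascQ σ = k ∧ dpQ σ = j)).card := by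
  exact le_antisymm (card_filter_StirlingSet_le n i j k) (card_filter_StirlingSet_le n i k j)
end
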